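/- Let s > 0 with s ∉ ℕ, and write s = k + σ with k ∈ ℕ and σ ∈ (0,1). In the Banach space C^s(ℍ) there exists a dense open (hence generic) subset R such that for every f ∈ R and every x₀ ∈ ℝ³, the pointwise Hölder exponent of f at x₀ equals s: h_f(x₀) = s. In particular, generic functions in C^s(ℍ) are monofractal. -/

import Mathlib

noncomputable section

open MeasureTheory

/-- The underlying space of the Heisenberg group: `ℝ³`. -/
abbrev H3 : Type := ℝ × ℝ × ℝ

/-- The Heisenberg group law `(p,q,r)∗(p',q',r') = (p+p', q+q', r+r'+2(qp'−pq'))`. -/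
def Hmul (x y : H3) : H3 :=
  (x.1 + y.1, x.2.1 + y.2.1, x.2.2 + y.2.2 + 2 * (x.2.1 * y.1 - x.1 * y.2.1))

/-- The inverse for the Heisenberg group law. -/
def Hinv (x : H3) : H3 := (-x.1, -x.2.1, -x.2.2)

/-- The homogeneous (gauge) norm `‖(p,q,r)‖ = ((p²+q²)²+r²)^(1/4)`. -/
def Hnorm (x : H3) : ℝ := ((x.1 ^ 2 + x.2.1 ^ 2) ^ 2 + x.2.2 ^ 2) ^ ((1 : ℝ) / 4)

/-- The gauge distance `δ(x,y) = ‖x⁻¹∗y‖`. -/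
def Hdist (x y : H3) : ℝ := Hnorm (Hmul (Hinv x) y)

/-- The gauge ball `B(x,r)`. -/
def Hball (x : H3) (r : ℝ) : Set H3 := {y | Hdist x y < r}

/-- The dilation `λ∘(p,q,r) = (λp, λq, λ²r)`. -/
def Hdil (l : ℝ) (x : H3) : H3 := (l * x.1, l * x.2.1, l ^ 2 * x.2.2)

/-- A lattice point of `ℤ³` seen inside `ℝ³`. -/
def latticePt (k : ℤ × ℤ × ℤ) : H3 := ((k.1 : ℝ), (k.2.1 : ℝ), (k.2.2 : ℝ))

/-- The dyadic point `x_{j,k} = 2^{−j}∘k`. -/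
def xjk (j : ℤ) (k : ℤ × ℤ × ℤ) : H3 := Hdil ((2 : ℝ) ^ (-j)) (latticePt k)

/-- The coordinates of a point of `ℝ³` as a function `Fin 3 → ℝ`. -/
def coords (x : H3) : Fin 3 → ℝ := ![x.1, x.2.1, x.2.2]

/-- Evaluation of a polynomial on `ℝ³` at a point. -/
def evalP (P : MvPolynomial (Fin 3) ℝ) (x : H3) : ℝ := MvPolynomial.eval (coords x) P

/-- The Heisenberg weights of the coordinates `(p,q,r)`: `ω(p)=ω(q)=1`, `ω(r)=2`. -/
def wH : Fin 3 → ℕ := ![1, 1, 2]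

/-- The homogeneous degree `deg_ℍ` of a polynomial on the Heisenberg group:
the monomial `p^a q^b r^c` has weight `a+b+2c`. -/
def hdeg (P : MvPolynomial (Fin 3) ℝ) : ℕ := MvPolynomial.weightedTotalDegree wH P

/-- The horizontal (resp. vertical) vector at `x`: `X = (1,0,2q)`, `Y = (0,1,−2p)`,
`Z = (0,0,1)`. -/
def hvec (i : Fin 3) (x : H3) : H3 :=
  if i = 0 then (1, 0, 2 * x.2.1) else if i = 1 then (0, 1, -2 * x.1) else (0, 0, 1)

/-- The derivative of `f` along the vector field `V₁ = X`, `V₂ = Y` or `V₃ = Z`. -/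
def lDeriv (i : Fin 3) (f : H3 → ℝ) (x : H3) : ℝ := lineDeriv ℝ f x (hvec i x)

/-- The iterated derivative `∇^α f = V_{α₁}⋯V_{α_m} f` along a word `α`. -/
def wordLDeriv : List (Fin 3) → (H3 → ℝ) → H3 → ℝ
  | [] => fun f => f
  | i :: t => fun f => lDeriv i (wordLDeriv t f)

/-- The weighted order `|α| = Σᵢ ω(αᵢ)` of a word, with `ω(1)=ω(2)=1`, `ω(3)=2`. -/
def wordWeight (α : List (Fin 3)) : ℕ :=
  (α.map fun i => if i = (2 : Fin 3) then 2 else 1).sum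

/-- Membership in the global Hölder space `C^s(ℍ)`, `s = k + σ`: all iterated horizontal
derivatives `∇^α f` with `|α| ≤ k` exist (each differentiation step exists everywhere),
are continuous and bounded, and the top-order ones are uniformly `σ`-Hölder for the gauge
distance. -/
def MemCs (k : ℕ) (σ : ℝ) (f : H3 → ℝ) : Prop :=
  (∀ (α : List (Fin 3)) (i : Fin 3), wordWeight (i :: α) ≤ k →
      ∀ x : H3, LineDifferentiableAt ℝ (wordLDeriv α f) x (hvec i x)) ∧
  (∀ α : List (Fin 3), wordWeight α ≤ k →
      Continuous (wordLDeriv α f) ∧ ∃ M : ℝ, ∀ x : H3, |wordLDeriv α f x| ≤ M) ∧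
  (∃ M : ℝ, ∀ α : List (Fin 3), wordWeight α = k → ∀ x y : H3,
      |wordLDeriv α f x - wordLDeriv α f y| ≤ M * Hdist x y ^ σ)

/-- The sup norm `‖∇^α f‖_∞` (as a real supremum). -/
def supDeriv (α : List (Fin 3)) (f : H3 → ℝ) : ℝ :=
  sSup (Set.range fun x => |wordLDeriv α f x|)

/-- The Hölder seminorm `sup_{|α|=k} sup_{x≠y} |∇^α f(x) − ∇^α f(y)|/δ(x,y)^σ`. -/
def holderSemi (k : ℕ) (σ : ℝ) (f : H3 → ℝ) : ℝ :=
  sSup {w : ℝ | ∃ (α : List (Fin 3)) (x y : H3),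
    wordWeight α = k ∧ x ≠ y ∧
    w = |wordLDeriv α f x - wordLDeriv α f y| / Hdist x y ^ σ}

/-- The Banach norm `‖f‖_{C^s} = Σ_{|α|≤k} ‖∇^α f‖_∞ + Hölder seminorm`, the (finite) sum
running over all words of weighted order at most `k`. -/
def CsNorm (k : ℕ) (σ : ℝ) (f : H3 → ℝ) : ℝ :=
  (∑ n ∈ Finset.range (k + 1), ∑ v : Fin n → Fin 3,
    if wordWeight (List.ofFn v) ≤ k then supDeriv (List.ofFn v) f else 0) +
  holderSemi k σ f

/-- The pointwise Hölder class `C^t(x₀)`: there are `C > 0`, `η > 0` and a polynomial `P`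
with homogeneous degree `< t` such that `|f(x₀∗x) − P(x)| ≤ C‖x‖^t` whenever `‖x‖ < η`. -/
def MemCsAt (t : ℝ) (x₀ : H3) (f : H3 → ℝ) : Prop :=
  ∃ C : ℝ, 0 < C ∧ ∃ η : ℝ, 0 < η ∧ ∃ P : MvPolynomial (Fin 3) ℝ, (hdeg P : ℝ) < t ∧
    ∀ x : H3, Hnorm x < η → |f (Hmul x₀ x) - evalP P x| ≤ C * Hnorm x ^ t

/-- The pointwise Hölder exponent `h_f(x₀) = sup{t > 0 : f ∈ C^t(x₀)}` (equal to `0` when the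
set is empty, by the convention `sSup ∅ = 0`). -/
def holderExponent (f : H3 → ℝ) (x₀ : H3) : ℝ :=
  sSup {t : ℝ | 0 < t ∧ MemCsAt t x₀ f}

/-!
Finite differences of order `k + 1` along the field `X` detect the exponent `s = k + σ`. With step
`r` they are at most `‖f‖ r ^ s` for every `f` in `C^s(ℍ)`, whereas `f ∈ C^t(x₀)` with `t > s`
forces them to be `o(r ^ s)` at base points within `O(r)` of `x₀`. Requiring them to be at least
`c * r ^ s`, near every point and for arbitrarily small `r`, therefore defines an open subset of
`C^s(ℍ)` whose members have exponent at most `s` everywhere, hence equal to `s` by Taylor's formula.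

This subset is dense because of a lacunary perturbation: at scale `L ^ (-n)` place a bump of height
`0` or `δ * L ^ (-n * s)` at each lattice point. Choosing the heights from coarse to fine scales,
one of the two values makes the difference of `f` minus the layers so far large at that point; for
`L` large the finer layers are too small to undo this.
-/

/-! ### The Heisenberg group -/

/-- The one-parameter subgroup `t ↦ exp (t Vᵢ)` of `ℍ` generated by the `i`-th vector field. -/
def Hexp (i : Fin 3) (t : ℝ) : H3 :=
  if i = 0 then (t, 0, 0) else if i = 1 then (0, t, 0) else (0, 0, t)

lemma Hmul_assoc (x y z : H3) : Hmul (Hmul x y) z = Hmul x (Hmul y z) := by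
  ext <;> simp only [Hmul] <;> ring

lemma Hinv_Hmul_cancel (x y : H3) : Hmul (Hinv x) (Hmul x y) = y := by
  ext <;> simp only [Hmul, Hinv] <;> ring

lemma Hmul_Hinv_cancel (x y : H3) : Hmul x (Hmul (Hinv x) y) = y := by
  ext <;> simp only [Hmul, Hinv] <;> ring

lemma Hmul_Hexp_zero (i : Fin 3) (x : H3) : Hmul x (Hexp i 0) = x := by
  fin_cases i <;> simp [Hmul, Hexp]

lemma Hexp_add (i : Fin 3) (t u : ℝ) : Hexp i (t + u) = Hmul (Hexp i t) (Hexp i u) := by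
  fin_cases i <;> simp [Hmul, Hexp]

lemma Hmul_Hexp_add (x : H3) (i : Fin 3) (t u : ℝ) :
    Hmul x (Hexp i (t + u)) = Hmul (Hmul x (Hexp i t)) (Hexp i u) := by
  rw [Hexp_add, Hmul_assoc]

lemma add_smul_hvec (i : Fin 3) (x : H3) (t : ℝ) : x + t • hvec i x = Hmul x (Hexp i t) := by
  fin_cases i <;> ext <;> simp [Hmul, Hexp, hvec] <;> ring

lemma Hmul_eq_Hmul_Hexp (x y : H3) :
    Hmul x y =
      Hmul (Hmul (Hmul x (Hexp 0 y.1)) (Hexp 1 y.2.1)) (Hexp 2 (y.2.2 + 2 * (y.1 * y.2.1))) := by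
  ext <;> simp only [Hmul, Hexp, Fin.isValue, reduceIte, one_ne_zero, Fin.reduceEq] <;> ring

lemma Hmul_Hexp_commutator (x : H3) (a b : ℝ) :
    Hmul (Hmul (Hmul (Hmul x (Hexp 0 a)) (Hexp 1 b)) (Hexp 0 (-a))) (Hexp 1 (-b)) =
      Hmul x (Hexp 2 (-4 * (a * b))) := by
  ext <;> simp only [Hmul, Hexp, Fin.isValue, reduceIte, one_ne_zero, Fin.reduceEq] <;> ring

lemma Hdil_Hmul (l : ℝ) (x y : H3) : Hdil l (Hmul x y) = Hmul (Hdil l x) (Hdil l y) := by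
  ext <;> simp only [Hdil, Hmul] <;> ring

lemma Hdil_Hdil (l m : ℝ) (x : H3) : Hdil l (Hdil m x) = Hdil (l * m) x := by
  ext <;> simp only [Hdil] <;> ring

lemma Hdil_one (x : H3) : Hdil 1 x = x := by
  ext <;> simp [Hdil]

lemma Hdil_Hexp (l : ℝ) (i : Fin 3) (t : ℝ) : Hdil l (Hexp i t) = Hexp i (l ^ wH i * t) := by
  fin_cases i <;> simp [Hdil, Hexp, wH]

/-! ### The gauge norm -/

/-- The complex gauge `|z|² + i r` of `x = (z, r)`, whose modulus is `‖x‖²`. -/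
def complexGauge (x : H3) : ℂ := ⟨x.1 ^ 2 + x.2.1 ^ 2, x.2.2⟩

lemma Hnorm_nonneg (x : H3) : 0 ≤ Hnorm x := by
  unfold Hnorm; positivity

lemma Hnorm_sq (x : H3) : Hnorm x ^ 2 = ‖complexGauge x‖ := by
  rw [Hnorm, ← Real.rpow_natCast, ← Real.rpow_mul (by positivity), Complex.norm_def,
    Real.sqrt_eq_rpow, Complex.normSq_apply, complexGauge]
  norm_num [sq]

lemma sq_fst_add_sq_snd_le (x : H3) : x.1 ^ 2 + x.2.1 ^ 2 ≤ Hnorm x ^ 2 := by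
  rw [Hnorm_sq]
  exact Complex.re_le_norm (complexGauge x)

lemma abs_fst_le_Hnorm (x : H3) : |x.1| ≤ Hnorm x :=
  abs_le_of_sq_le_sq (by nlinarith [sq_fst_add_sq_snd_le x]) (Hnorm_nonneg x)

lemma abs_snd_le_Hnorm (x : H3) : |x.2.1| ≤ Hnorm x :=
  abs_le_of_sq_le_sq (by nlinarith [sq_fst_add_sq_snd_le x]) (Hnorm_nonneg x)

lemma abs_thd_le_Hnorm_sq (x : H3) : |x.2.2| ≤ Hnorm x ^ 2 := by
  rw [Hnorm_sq]
  exact Complex.abs_im_le_norm (complexGauge x)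

-- The cross term `2 z w̄` has modulus at most `2 ‖x‖ ‖y‖`, which completes the square.
lemma Hnorm_Hmul_le (x y : H3) : Hnorm (Hmul x y) ≤ Hnorm x + Hnorm y := by
  set z : ℂ := ⟨x.1, x.2.1⟩ with hz
  set w : ℂ := ⟨y.1, y.2.1⟩ with hw
  have gauge_mul : complexGauge (Hmul x y) =
      complexGauge x + complexGauge y + 2 * (z * starRingEnd ℂ w) := by
    apply Complex.ext <;> simp [complexGauge, Hmul, hz, hw] <;> ring
  have norm_le (u : H3) : ‖(⟨u.1, u.2.1⟩ : ℂ)‖ ≤ Hnorm u := by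
    refine abs_le_of_sq_le_sq' ?_ (Hnorm_nonneg u) |>.2
    rw [Complex.sq_norm, Complex.normSq_apply, ← sq, ← sq]
    exact sq_fst_add_sq_snd_le u
  refine abs_le_of_sq_le_sq' ?_ (add_nonneg (Hnorm_nonneg x) (Hnorm_nonneg y)) |>.2
  calc Hnorm (Hmul x y) ^ 2
      ≤ ‖complexGauge x‖ + ‖complexGauge y‖ + 2 * (‖z‖ * ‖w‖) := by
        rw [Hnorm_sq, gauge_mul]
        refine norm_add₃_le.trans_eq ?_
        rw [norm_mul 2, norm_mul z, RCLike.norm_conj, Complex.norm_two]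
    _ ≤ Hnorm x ^ 2 + Hnorm y ^ 2 + 2 * (Hnorm x * Hnorm y) := by
        rw [Hnorm_sq, Hnorm_sq]
        gcongr
        · exact Hnorm_nonneg x
        · exact norm_le x
        · exact norm_le y
    _ = (Hnorm x + Hnorm y) ^ 2 := by ring

lemma Hdist_Hmul_left (x z : H3) : Hdist x (Hmul x z) = Hnorm z := by
  rw [Hdist, Hinv_Hmul_cancel]

lemma Hnorm_Hdil {l : ℝ} (hl : 0 ≤ l) (x : H3) : Hnorm (Hdil l x) = l * Hnorm x := by
  have : complexGauge (Hdil l x) = (l ^ 2 : ℝ) * complexGauge x := by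
    rw [Complex.ofReal_pow]
    apply Complex.ext
    · simp [complexGauge, Hdil, sq]
      ring
    · simp [complexGauge, Hdil, sq]
  refine (pow_left_inj₀ (Hnorm_nonneg _) (mul_nonneg hl (Hnorm_nonneg x)) two_ne_zero).1 ?_
  rw [Hnorm_sq, this, norm_mul, mul_pow, Hnorm_sq, Complex.norm_real,
    Real.norm_of_nonneg (by positivity)]

lemma Hnorm_Hexp (i : Fin 3) (t : ℝ) : Hnorm (Hexp i t) = |t| ^ ((1 : ℝ) / wH i) := by
  have norm_horizontal : ((t ^ 2) ^ 2) ^ ((1 : ℝ) / 4) = |t| := by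
    rw [← pow_mul, ← (show Even (2 * 2) by decide).pow_abs t, ← Real.rpow_natCast,
      ← Real.rpow_mul (abs_nonneg t)]
    norm_num
  have norm_vertical : (t ^ 2) ^ ((1 : ℝ) / 4) = |t| ^ ((1 : ℝ) / 2) := by
    rw [← sq_abs, ← Real.rpow_natCast, ← Real.rpow_mul (abs_nonneg t)]
    norm_num
  fin_cases i
  · simpa [Hnorm, Hexp, wH] using norm_horizontal
  · simpa [Hnorm, Hexp, wH] using norm_horizontal
  · simpa [Hnorm, Hexp, wH] using norm_vertical

/-! ### Derivatives along the invariant fields -/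

/-- `g` is the derivative of `f` along the `i`-th vector field, at every point. -/
def HasFieldDeriv (i : Fin 3) (f g : H3 → ℝ) : Prop :=
  ∀ x, HasLineDerivAt ℝ f (g x) x (hvec i x)

namespace HasFieldDeriv

variable {i : Fin 3} {f g : H3 → ℝ}

lemma hasDerivAt (h : HasFieldDeriv i f g) (x : H3) (t : ℝ) :
    HasDerivAt (fun u => f (Hmul x (Hexp i u))) (g (Hmul x (Hexp i t))) t := by
  have at_zero := h (Hmul x (Hexp i t))
  simp only [HasLineDerivAt, add_smul_hvec, ← Hmul_Hexp_add] at at_zero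
  simpa only [add_sub_cancel] using
    HasDerivAt.comp_sub_const t t (f := fun u => f (Hmul x (Hexp i (t + u)))) (by rwa [sub_self])

lemma lDeriv_eq (h : HasFieldDeriv i f g) : lDeriv i f = g :=
  funext fun x => (h x).lineDeriv

lemma sub {f' g' : H3 → ℝ} (h : HasFieldDeriv i f g) (h' : HasFieldDeriv i f' g') :
    HasFieldDeriv i (fun x => f x - f' x) (fun x => g x - g' x) :=
  fun x => (h x).sub (h' x)

lemma abs_sub_le (h : HasFieldDeriv i f g) {B : ℝ} (hB : ∀ x, |g x| ≤ B) (x : H3) (t : ℝ) :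
    |f (Hmul x (Hexp i t)) - f x| ≤ B * |t| := by
  simpa [Hmul_Hexp_zero] using
    convex_univ.norm_image_sub_le_of_norm_hasDerivWithin_le (x := 0) (y := t)
      (fun u _ => (h.hasDerivAt x u).hasDerivWithinAt) (fun u _ => hB _) trivial trivial

end HasFieldDeriv

lemma wordLDeriv_cons (i : Fin 3) (α : List (Fin 3)) (f : H3 → ℝ) :
    wordLDeriv (i :: α) f = lDeriv i (wordLDeriv α f) := rfl

lemma wordWeight_cons (i : Fin 3) (α : List (Fin 3)) :
    wordWeight (i :: α) = wH i + wordWeight α := by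
  fin_cases i <;> simp [wordWeight, wH]

lemma wordWeight_replicate_append (n : ℕ) (i : Fin 3) (α : List (Fin 3)) :
    wordWeight (List.replicate n i ++ α) = n * wH i + wordWeight α := by
  induction n with
  | zero => simp
  | succ n ih => rw [List.replicate_succ, List.cons_append, wordWeight_cons, ih]; ring

lemma wH_pos (i : Fin 3) : 0 < wH i := by
  fin_cases i <;> simp [wH]

lemma MemCs.hasFieldDeriv {k : ℕ} {σ : ℝ} {f : H3 → ℝ} (hf : MemCs k σ f) {α : List (Fin 3)}
    {i : Fin 3} (h : wordWeight (i :: α) ≤ k) :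
    HasFieldDeriv i (wordLDeriv α f) (wordLDeriv (i :: α) f) :=
  fun x => (hf.1 α i h x).hasLineDerivAt

/-! ### Taylor expansion with a Hölder remainder -/

lemma hasDerivAt_taylor_sum (a : ℕ → ℝ) (m : ℕ) (t : ℝ) :
    HasDerivAt (fun t => ∑ j ∈ Finset.range (m + 2), a j * t ^ j / (j.factorial : ℝ))
      (∑ j ∈ Finset.range (m + 1), a (j + 1) * t ^ j / (j.factorial : ℝ)) t := by
  simp only [Finset.sum_range_succ' _ (m + 1), pow_zero]
  refine HasDerivAt.add_const _ (HasDerivAt.fun_sum fun j _ => ?_)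
  refine (((hasDerivAt_pow (j + 1) t).const_mul (a (j + 1))).div_const _).congr_deriv ?_
  rw [Nat.factorial_succ, Nat.add_sub_cancel]
  push_cast
  field_simp

lemma abs_sub_taylor_sum_le {B τ : ℝ} (hτ : 0 ≤ τ) (hB : 0 ≤ B) (m : ℕ) (u : ℕ → ℝ → ℝ)
    (hu : ∀ j < m, ∀ t, HasDerivAt (u j) (u (j + 1) t) t)
    (hum : ∀ t, |u m t - u m 0| ≤ B * |t| ^ τ) (t : ℝ) :
    |u 0 t - ∑ j ∈ Finset.range (m + 1), u j 0 * t ^ j / (j.factorial : ℝ)| ≤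
      B * |t| ^ (m + τ) := by
  induction m generalizing u t with
  | zero => simpa using hum t
  | succ m ih =>
    set v : ℝ → ℝ := fun t => u 0 t - ∑ j ∈ Finset.range (m + 2), u j 0 * t ^ j / (j.factorial : ℝ)
    have hv0 : v 0 = 0 := by simp [v, Finset.sum_range_succ']
    have hderiv (t : ℝ) : HasDerivAt v (u 1 t - ∑ j ∈ Finset.range (m + 1),
        u (j + 1) 0 * t ^ j / (j.factorial : ℝ)) t :=
      (hu 0 m.succ_pos t).sub (hasDerivAt_taylor_sum (fun j => u j 0) m t)
    have hderiv_le : ∀ x ∈ Set.uIcc 0 t, |u 1 x - ∑ j ∈ Finset.range (m + 1),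
        u (j + 1) 0 * x ^ j / (j.factorial : ℝ)| ≤ B * |t| ^ (m + τ) := by
      intro x hx
      have hxt : |x| ≤ |t| := by simpa using Set.abs_sub_left_of_mem_uIcc hx
      refine (ih (fun j => u (j + 1)) (fun j hj => hu (j + 1) (by lia)) hum x).trans ?_
      gcongr
    have hmean := (convex_uIcc 0 t).norm_image_sub_le_of_norm_hasDerivWithin_le
      (fun x _ => (hderiv x).hasDerivWithinAt) hderiv_le Set.left_mem_uIcc Set.right_mem_uIcc
    rw [hv0, sub_zero, sub_zero, Real.norm_eq_abs, Real.norm_eq_abs, mul_assoc] at hmean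
    refine hmean.trans_eq ?_
    nth_rw 2 [← Real.rpow_one |t|]
    rw [← Real.rpow_add_of_nonneg (abs_nonneg t) (by positivity) zero_le_one]
    push_cast
    ring_nf

lemma MemCs.abs_sub_taylor_sum_le {k : ℕ} {σ : ℝ} {f : H3 → ℝ} (hf : MemCs k σ f) {i : Fin 3}
    {α : List (Fin 3)} {m : ℕ} (hm : wordWeight (List.replicate m i ++ α) ≤ k)
    {B τ : ℝ} (hτ : 0 ≤ τ) (hB : 0 ≤ B)
    (hholder : ∀ x t, |wordLDeriv (List.replicate m i ++ α) f (Hmul x (Hexp i t)) -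
      wordLDeriv (List.replicate m i ++ α) f x| ≤ B * |t| ^ τ) (x : H3) (t : ℝ) :
    |wordLDeriv α f (Hmul x (Hexp i t)) - ∑ j ∈ Finset.range (m + 1),
      wordLDeriv (List.replicate j i ++ α) f x * t ^ j / (j.factorial : ℝ)| ≤
      B * |t| ^ (m + τ) := by
  have hderiv : ∀ j < m, ∀ t,
      HasDerivAt (fun u => wordLDeriv (List.replicate j i ++ α) f (Hmul x (Hexp i u)))
        (wordLDeriv (List.replicate (j + 1) i ++ α) f (Hmul x (Hexp i t))) t := by
    intro j hj
    refine (hf.hasFieldDeriv (α := List.replicate j i ++ α) (hm.trans' ?_)).hasDerivAt x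
    rw [wordWeight_cons, wordWeight_replicate_append, wordWeight_replicate_append]
    nlinarith [Nat.mul_le_mul_right (wH i) hj]
  simpa [Hmul_Hexp_zero] using _root_.abs_sub_taylor_sum_le hτ hB m _ hderiv
    (by simpa [Hmul_Hexp_zero] using hholder x) t

lemma MemCs.exists_abs_sub_Hmul_le {k : ℕ} {σ : ℝ} {f : H3 → ℝ} (hf : MemCs k σ f) :
    ∃ M, 0 ≤ M ∧ ∀ α, wordWeight α = k → ∀ x z,
      |wordLDeriv α f (Hmul x z) - wordLDeriv α f x| ≤ M * Hnorm z ^ σ := by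
  obtain ⟨M, hM⟩ := hf.2.2
  refine ⟨|M|, abs_nonneg M, fun α hα x z => ?_⟩
  have hrpow := Real.rpow_nonneg (Hnorm_nonneg z) σ
  calc |wordLDeriv α f (Hmul x z) - wordLDeriv α f x| ≤ M * Hnorm z ^ σ := by
        simpa [abs_sub_comm, Hdist_Hmul_left] using hM α hα x (Hmul x z)
    _ ≤ |M| * Hnorm z ^ σ := by gcongr; exact le_abs_self M

lemma HasFieldDeriv.abs_sub_add_mul_le {i : Fin 3} (hi : wH i = 1) {h h' : H3 → ℝ}
    (hd : HasFieldDeriv i h h') {M σ : ℝ} (hσ : 0 ≤ σ) (hM : 0 ≤ M)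
    (hholder : ∀ x z, |h' (Hmul x z) - h' x| ≤ M * Hnorm z ^ σ) (x : H3) (t : ℝ) :
    |h (Hmul x (Hexp i t)) - (h x + t * h' x)| ≤ M * |t| ^ (1 + σ) := by
  have htaylor := _root_.abs_sub_taylor_sum_le hσ hM 1
    (fun j u => if j = 0 then h (Hmul x (Hexp i u)) else h' (Hmul x (Hexp i u)))
    (fun j hj u => by simpa [Nat.lt_one_iff.1 hj] using hd.hasDerivAt x u)
    (fun u => by simpa [Hmul_Hexp_zero, Hnorm_Hexp, hi] using hholder x (Hexp i u)) t
  simpa [Finset.sum_range_succ, Hmul_Hexp_zero, mul_comm] using htaylor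

/-! ### Hölder continuity along one field -/

lemma abs_sub_Hmul_Hexp_Hexp_le {g : H3 → ℝ} {M σ : ℝ} (hσ : 0 ≤ σ) (hM : 0 ≤ M)
    (hg : ∀ x z, |g (Hmul x z) - g x| ≤ M * Hnorm z ^ σ) {i j : Fin 3} (hi : wH i = 1)
    (hj : wH j = 1) {a b c : ℝ} (ha : |a| = c) (hb : |b| = c) (x : H3) :
    |g (Hmul (Hmul x (Hexp i a)) (Hexp j b)) - g x| ≤ M * (2 * c) ^ σ := by
  have hnorm : Hnorm (Hmul (Hexp i a) (Hexp j b)) ≤ 2 * c :=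
    (Hnorm_Hmul_le _ _).trans_eq (by simp [Hnorm_Hexp, hi, hj, ha, hb, two_mul])
  rw [Hmul_assoc]
  refine (hg x _).trans ?_
  gcongr
  exact Hnorm_nonneg _

section Vertical

variable {h hX hY : H3 → ℝ} {M σ : ℝ}

-- The first-order terms cancel along the four sides, up to the oscillation of `hX` and `hY`.
lemma abs_sub_Hmul_Hexp_commutator_le (dX : HasFieldDeriv 0 h hX) (dY : HasFieldDeriv 1 h hY)
    (hσ : 0 ≤ σ) (hM : 0 ≤ M) (bX : ∀ x z, |hX (Hmul x z) - hX x| ≤ M * Hnorm z ^ σ)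
    (bY : ∀ x z, |hY (Hmul x z) - hY x| ≤ M * Hnorm z ^ σ) {a b c : ℝ} (ha : |a| = c)
    (hb : |b| = c) (x : H3) :
    |h (Hmul (Hmul (Hmul (Hmul x (Hexp 0 a)) (Hexp 1 b)) (Hexp 0 (-a))) (Hexp 1 (-b))) - h x| ≤
      5 * M * (2 * c) ^ (1 + σ) := by
  have hc : 0 ≤ c := ha ▸ abs_nonneg a
  set x₁ := Hmul x (Hexp 0 a)
  set x₂ := Hmul x₁ (Hexp 1 b)
  set x₃ := Hmul x₂ (Hexp 0 (-a))
  have oscX := abs_sub_Hmul_Hexp_Hexp_le hσ hM bX (i := 0) (j := 1) rfl rfl ha hb x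
  have oscY := abs_sub_Hmul_Hexp_Hexp_le hσ hM bY (i := 1) (j := 0) rfl rfl hb
    ((abs_neg a).trans ha) x₁
  have side₁ := dX.abs_sub_add_mul_le rfl hσ hM bX x a
  have side₂ := dY.abs_sub_add_mul_le rfl hσ hM bY x₁ b
  have side₃ := dX.abs_sub_add_mul_le rfl hσ hM bX x₂ (-a)
  have side₄ := dY.abs_sub_add_mul_le rfl hσ hM bY x₃ (-b)
  rw [abs_neg] at side₃ side₄
  rw [ha] at side₁ side₃
  rw [hb] at side₂ side₄
  have prodX : |a * (hX x₂ - hX x)| ≤ c * (M * (2 * c) ^ σ) := by rw [abs_mul, ha]; gcongr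
  have prodY : |b * (hY x₃ - hY x₁)| ≤ c * (M * (2 * c) ^ σ) := by rw [abs_mul, hb]; gcongr
  have rpow_le : M * c ^ (1 + σ) ≤ M * (2 * c) ^ (1 + σ) := by gcongr; linarith
  have rpow_eq : 2 * (c * (M * (2 * c) ^ σ)) = M * (2 * c) ^ (1 + σ) := by
    rw [Real.rpow_add_of_nonneg (by positivity) zero_le_one hσ, Real.rpow_one]
    ring
  rw [abs_le] at *
  constructor <;> linarith

-- A horizontal square of side `√|t| / 2` fails to close up by exactly `t` in the direction `Z`.
lemma abs_sub_Hmul_Hexp_two_le (dX : HasFieldDeriv 0 h hX) (dY : HasFieldDeriv 1 h hY)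
    (hσ : 0 ≤ σ) (hM : 0 ≤ M) (bX : ∀ x z, |hX (Hmul x z) - hX x| ≤ M * Hnorm z ^ σ)
    (bY : ∀ x z, |hY (Hmul x z) - hY x| ≤ M * Hnorm z ^ σ) (x : H3) (t : ℝ) :
    |h (Hmul x (Hexp 2 t)) - h x| ≤ 5 * M * |t| ^ ((1 + σ) / 2) := by
  obtain ⟨a, b, ha, hb, hab⟩ :
      ∃ a b, |a| = √|t| / 2 ∧ |b| = √|t| / 2 ∧ -4 * (a * b) = t := by
    have hc : |√|t| / 2| = √|t| / 2 := abs_of_nonneg (by positivity)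
    have hcc := Real.mul_self_sqrt (abs_nonneg t)
    rcases abs_cases t with ⟨ht, -⟩ | ⟨ht, -⟩
    · exact ⟨-(√|t| / 2), √|t| / 2, by rw [abs_neg, hc], hc, by linarith⟩
    · exact ⟨√|t| / 2, √|t| / 2, hc, hc, by linarith⟩
  have hroot : (2 * (√|t| / 2)) ^ (1 + σ) = |t| ^ ((1 + σ) / 2) := by
    rw [mul_div_cancel₀ _ two_ne_zero, Real.sqrt_eq_rpow, ← Real.rpow_mul (abs_nonneg t)]
    ring_nf
  rw [← hroot, ← hab, ← Hmul_Hexp_commutator]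
  exact abs_sub_Hmul_Hexp_commutator_le dX dY hσ hM bX bY (by rw [hab, ha]) (by rw [hab, hb]) x

end Vertical

lemma MemCs.exists_abs_sub_Hmul_Hexp_le {k : ℕ} {σ : ℝ} (hσ : 0 ≤ σ) {f : H3 → ℝ}
    (hf : MemCs k σ f) (i : Fin 3) :
    ∃ B, 0 ≤ B ∧ ∀ α, wordWeight α ≤ k → k < wordWeight α + wH i → ∀ x t,
      |wordLDeriv α f (Hmul x (Hexp i t)) - wordLDeriv α f x| ≤
        B * |t| ^ ((k - wordWeight α + σ) / wH i) := by
  obtain ⟨M, hM, hholder⟩ := hf.exists_abs_sub_Hmul_le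
  refine ⟨5 * M, by positivity, fun α hα hk x t => ?_⟩
  obtain hα | hα : wordWeight α = k ∨ wordWeight α + 1 = k := by
    have : wH i ≤ 2 := by fin_cases i <;> simp [wH]
    lia
  · refine (hholder α hα x (Hexp i t)).trans ?_
    rw [Hnorm_Hexp, ← Real.rpow_mul (abs_nonneg t), hα, sub_self, zero_add, one_div_mul_eq_div]
    gcongr
    linarith
  · obtain rfl : i = 2 := by
      fin_cases i
      · simp [wH] at hk; lia
      · simp [wH] at hk; lia
      · rfl
    have hw (j : Fin 3) (hj : wH j = 1) : wordWeight (j :: α) = k := by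
      rw [wordWeight_cons]; lia
    convert! abs_sub_Hmul_Hexp_two_le (hf.hasFieldDeriv (hw 0 rfl).le)
      (hf.hasFieldDeriv (hw 1 rfl).le) hσ hM (hholder _ (hw 0 rfl)) (hholder _ (hw 1 rfl)) x t
      using 3
    rw [← hα, show wH 2 = 2 from rfl]
    norm_num

/-! ### Polynomials and their homogeneous degree -/

section WeightedTotalDegree

variable {ι R : Type*} [CommSemiring R] (w : ι → ℕ)

lemma weightedTotalDegree_le_iff {P : MvPolynomial ι R} {n : ℕ} :
    MvPolynomial.weightedTotalDegree w P ≤ n ↔ ∀ d ∈ P.support, Finsupp.weight w d ≤ n :=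
  Finset.sup_le_iff

lemma weightedTotalDegree_C (c : R) :
    MvPolynomial.weightedTotalDegree w (MvPolynomial.C c) = 0 := by
  classical
  refine Nat.le_zero.1 ((weightedTotalDegree_le_iff w).2 fun d hd => ?_)
  rw [MvPolynomial.mem_support_iff, MvPolynomial.coeff_C, ite_ne_right_iff] at hd
  simp [← hd.1]

lemma weightedTotalDegree_X_le (i : ι) :
    MvPolynomial.weightedTotalDegree w (MvPolynomial.X i : MvPolynomial ι R) ≤ w i := by
  classical
  refine (weightedTotalDegree_le_iff w).2 fun d hd => ?_
  rw [MvPolynomial.mem_support_iff, MvPolynomial.coeff_X, ite_ne_right_iff] at hd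
  simp [← hd.1, Finsupp.weight_single]

lemma weightedTotalDegree_add_le (P Q : MvPolynomial ι R) :
    MvPolynomial.weightedTotalDegree w (P + Q) ≤
      max (MvPolynomial.weightedTotalDegree w P) (MvPolynomial.weightedTotalDegree w Q) := by
  classical
  refine (weightedTotalDegree_le_iff w).2 fun d hd => ?_
  rcases Finset.mem_union.1 (MvPolynomial.support_add hd) with hd | hd
  · exact le_max_of_le_left (MvPolynomial.le_weightedTotalDegree w hd)
  · exact le_max_of_le_right (MvPolynomial.le_weightedTotalDegree w hd)

lemma weightedTotalDegree_mul_le (P Q : MvPolynomial ι R) :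
    MvPolynomial.weightedTotalDegree w (P * Q) ≤
      MvPolynomial.weightedTotalDegree w P + MvPolynomial.weightedTotalDegree w Q := by
  classical
  refine (weightedTotalDegree_le_iff w).2 fun d hd => ?_
  obtain ⟨a, ha, b, hb, rfl⟩ := Finset.mem_add.1 (MvPolynomial.support_mul P Q hd)
  rw [map_add]
  exact add_le_add (MvPolynomial.le_weightedTotalDegree w ha)
    (MvPolynomial.le_weightedTotalDegree w hb)

lemma weightedTotalDegree_pow_le (P : MvPolynomial ι R) (j : ℕ) :
    MvPolynomial.weightedTotalDegree w (P ^ j) ≤ j * MvPolynomial.weightedTotalDegree w P := by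
  induction j with
  | zero => simpa using (weightedTotalDegree_C w (1 : R)).le
  | succ j ih =>
    rw [pow_succ]
    exact (weightedTotalDegree_mul_le w _ _).trans (by linarith)

end WeightedTotalDegree

/-- Functions which differ from a polynomial of homogeneous degree at most `n` by
`O(‖x‖ ^ (n + σ))` on all of `ℍ`. -/
def polyApprox (σ : ℝ) (n : ℕ) : Submodule ℝ (H3 → ℝ) where
  carrier := {F | ∃ P, hdeg P ≤ n ∧ ∃ C, 0 ≤ C ∧
    ∀ x, |F x - evalP P x| ≤ C * Hnorm x ^ (n + σ)}
  zero_mem' := ⟨0, by simp [hdeg, MvPolynomial.weightedTotalDegree_zero], 0, le_rfl,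
    by simp [evalP]⟩
  add_mem' := by
    rintro F G ⟨P, hP, C, hC, hF⟩ ⟨Q, hQ, D, hD, hG⟩
    refine ⟨P + Q, (weightedTotalDegree_add_le wH P Q).trans (max_le hP hQ), C + D,
      add_nonneg hC hD, fun x => ?_⟩
    calc |(F + G) x - evalP (P + Q) x| = |(F x - evalP P x) + (G x - evalP Q x)| := by
          simp only [Pi.add_apply, evalP, map_add]; ring_nf
      _ ≤ (C + D) * Hnorm x ^ (n + σ) := by
          rw [add_mul]
          exact (abs_add_le _ _).trans (add_le_add (hF x) (hG x))
  smul_mem' := by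
    rintro c F ⟨P, hP, C, hC, hF⟩
    refine ⟨MvPolynomial.C c * P, (weightedTotalDegree_mul_le wH _ P).trans ?_, |c| * C,
      by positivity, fun x => ?_⟩
    · rwa [weightedTotalDegree_C, zero_add]
    · calc |(c • F) x - evalP (MvPolynomial.C c * P) x| = |c| * |F x - evalP P x| := by
            simp [evalP, ← mul_sub, abs_mul]
        _ ≤ |c| * C * Hnorm x ^ (n + σ) := by rw [mul_assoc]; gcongr; exact hF x

lemma const_mem_polyApprox (σ : ℝ) (n : ℕ) (c : ℝ) : (fun _ => c) ∈ polyApprox σ n :=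
  ⟨MvPolynomial.C c, by simp [hdeg, weightedTotalDegree_C], 0, le_rfl, by simp [evalP]⟩

lemma mem_polyApprox_of_abs_sub_le {σ : ℝ} {n : ℕ} {F G : H3 → ℝ} (hG : G ∈ polyApprox σ n)
    {C : ℝ} (hC : 0 ≤ C) (hFG : ∀ x, |F x - G x| ≤ C * Hnorm x ^ (n + σ)) :
    F ∈ polyApprox σ n := by
  obtain ⟨P, hP, D, hD, hGP⟩ := hG
  refine ⟨P, hP, C + D, add_nonneg hC hD, fun x => ?_⟩
  rw [add_mul]
  exact (abs_sub_le (F x) (G x) (evalP P x)).trans (add_le_add (hFG x) (hGP x))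

lemma mul_evalP_mem_polyApprox {σ : ℝ} (hσ : 0 ≤ σ) {n d : ℕ} {F : H3 → ℝ}
    (hF : F ∈ polyApprox σ n) {Q : MvPolynomial (Fin 3) ℝ} (hQ : hdeg Q ≤ d) {D : ℝ}
    (hD : 0 ≤ D) (hQD : ∀ x, |evalP Q x| ≤ D * Hnorm x ^ d) :
    (fun x => F x * evalP Q x) ∈ polyApprox σ (n + d) := by
  obtain ⟨P, hP, C, hC, hFP⟩ := hF
  refine ⟨P * Q, (weightedTotalDegree_mul_le wH P Q).trans (add_le_add hP hQ), C * D,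
    mul_nonneg hC hD, fun x => ?_⟩
  have hx := Hnorm_nonneg x
  calc |F x * evalP Q x - evalP (P * Q) x| = |F x - evalP P x| * |evalP Q x| := by
        rw [← abs_mul, sub_mul, evalP, evalP, evalP, map_mul]
    _ ≤ (C * Hnorm x ^ (n + σ)) * (D * Hnorm x ^ d) := by
        gcongr
        · exact hFP x
        · exact hQD x
    _ = C * D * (Hnorm x ^ (n + σ) * Hnorm x ^ (d : ℝ)) := by rw [Real.rpow_natCast]; ring
    _ = C * D * Hnorm x ^ ((n + d : ℕ) + σ) := by
        rw [← Real.rpow_add_of_nonneg hx (by positivity) (by positivity)]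
        push_cast
        ring_nf

/-! ### Functions in `C^s` belong to all the pointwise classes `C^s(x₀)` -/

lemma evalP_vertical_eq (x : H3) :
    evalP (MvPolynomial.X 2 + MvPolynomial.C 2 * (MvPolynomial.X 0 * MvPolynomial.X 1)) x =
      x.2.2 + 2 * (x.1 * x.2.1) := by
  simp [evalP, coords]

lemma hdeg_vertical_le :
    hdeg (MvPolynomial.X 2 + MvPolynomial.C 2 * (MvPolynomial.X 0 * MvPolynomial.X 1)) ≤ 2 := by
  refine (weightedTotalDegree_add_le wH _ _).trans (max_le (weightedTotalDegree_X_le wH 2) ?_)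
  refine (weightedTotalDegree_mul_le wH _ _).trans ?_
  rw [weightedTotalDegree_C, zero_add]
  exact (weightedTotalDegree_mul_le wH _ _).trans
    (add_le_add (weightedTotalDegree_X_le wH 0) (weightedTotalDegree_X_le wH 1))

lemma abs_thd_add_two_mul_le (x : H3) : |x.2.2 + 2 * (x.1 * x.2.1)| ≤ 2 * Hnorm x ^ 2 := by
  have hprod : |2 * (x.1 * x.2.1)| ≤ Hnorm x ^ 2 := by
    refine (abs_le.2 ⟨?_, ?_⟩).trans (sq_fst_add_sq_snd_le x)
    · nlinarith [sq_nonneg (x.1 + x.2.1)]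
    · nlinarith [sq_nonneg (x.1 - x.2.1)]
  linarith [abs_add_le x.2.2 (2 * (x.1 * x.2.1)), abs_thd_le_Hnorm_sq x]

namespace MemCs

variable {k : ℕ} {σ : ℝ} {f : H3 → ℝ}

lemma wordLDeriv_mul_pow_mem_polyApprox (hσ : 0 ≤ σ) {γ : H3 → H3}
    (hγ : ∀ β n, n + wordWeight β = k → (fun x => wordLDeriv β f (γ x)) ∈ polyApprox σ n)
    {i : Fin 3} {Q : MvPolynomial (Fin 3) ℝ} (hQ : hdeg Q ≤ wH i) {D : ℝ} (hD : 0 ≤ D)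
    (hQD : ∀ x, |evalP Q x| ≤ D * Hnorm x ^ wH i) {β : List (Fin 3)} {n j : ℕ}
    (hn : n + wordWeight β = k) (hj : j * wH i ≤ n) :
    (fun x => wordLDeriv (List.replicate j i ++ β) f (γ x) * evalP Q x ^ j) ∈
      polyApprox σ n := by
  have hcoeff := hγ (List.replicate j i ++ β) (n - j * wH i)
    (by rw [wordWeight_replicate_append]; lia)
  have hpow := mul_evalP_mem_polyApprox hσ hcoeff (Q := Q ^ j)
    ((weightedTotalDegree_pow_le wH Q j).trans (Nat.mul_le_mul_left j hQ)) (pow_nonneg hD j)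
    (fun x => by
      rw [evalP, map_pow, abs_pow, mul_comm j, pow_mul, ← mul_pow]
      gcongr
      exact hQD x)
  rw [Nat.sub_add_cancel hj] at hpow
  simpa [evalP] using hpow

lemma comp_Hmul_Hexp_mem_polyApprox (hσ : 0 ≤ σ) (hf : MemCs k σ f) {γ : H3 → H3}
    (hγ : ∀ β n, n + wordWeight β = k → (fun x => wordLDeriv β f (γ x)) ∈ polyApprox σ n)
    (i : Fin 3) {Q : MvPolynomial (Fin 3) ℝ} (hQ : hdeg Q ≤ wH i) {D : ℝ} (hD : 0 ≤ D)
    (hQD : ∀ x, |evalP Q x| ≤ D * Hnorm x ^ wH i) {β : List (Fin 3)} {n : ℕ}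
    (hn : n + wordWeight β = k) :
    (fun x => wordLDeriv β f (Hmul (γ x) (Hexp i (evalP Q x)))) ∈ polyApprox σ n := by
  obtain ⟨B, hB, hholder⟩ := hf.exists_abs_sub_Hmul_Hexp_le hσ i
  have hi : (0 : ℝ) < wH i := mod_cast wH_pos i
  set m := n / wH i
  have hmn : m * wH i ≤ n := Nat.div_mul_le_self n (wH i)
  have hnm : n < (m + 1) * wH i := Nat.lt_mul_of_div_lt (Nat.lt_succ_self m) (wH_pos i)
  have hweight := wordWeight_replicate_append m i β
  have hτ : 0 ≤ (k - wordWeight (List.replicate m i ++ β) + σ) / wH i := by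
    have : (wordWeight (List.replicate m i ++ β) : ℝ) ≤ k := by
      rw [hweight]; exact_mod_cast (by lia)
    exact div_nonneg (by linarith) hi.le
  have hexponent : m + (k - wordWeight (List.replicate m i ++ β) + σ) / wH i = (n + σ) / wH i := by
    rw [hweight, ← hn]
    push_cast
    field_simp
    ring
  refine mem_polyApprox_of_abs_sub_le (G := ∑ j ∈ Finset.range (m + 1), ((j.factorial : ℝ)⁻¹) •
    fun x => wordLDeriv (List.replicate j i ++ β) f (γ x) * evalP Q x ^ j)
    (Submodule.sum_mem _ fun j hj => Submodule.smul_mem _ _ ?_)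
    (C := B * D ^ ((n + σ) / wH i)) (by positivity) fun x => ?_
  · refine wordLDeriv_mul_pow_mem_polyApprox hσ hγ hQ hD hQD hn (hmn.trans' ?_)
    exact Nat.mul_le_mul_right _ (Finset.mem_range_succ_iff.1 hj)
  · have htaylor := hf.abs_sub_taylor_sum_le (by lia) hτ hB
      (hholder (List.replicate m i ++ β) (by lia) (by lia)) (γ x) (evalP Q x)
    have hrpow : |evalP Q x| ^ ((n + σ) / wH i) ≤ D ^ ((n + σ) / wH i) * Hnorm x ^ (n + σ) := by
      have hx := Hnorm_nonneg x
      calc |evalP Q x| ^ ((n + σ) / wH i) ≤ (D * Hnorm x ^ wH i) ^ ((n + σ) / wH i) := by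
            gcongr; exact hQD x
        _ = D ^ ((n + σ) / wH i) * Hnorm x ^ (n + σ) := by
            rw [Real.mul_rpow hD (by positivity), ← Real.rpow_natCast_mul hx,
              mul_div_cancel₀ _ hi.ne']
    rw [hexponent] at htaylor
    simp only [Finset.sum_apply, Pi.smul_apply, smul_eq_mul, mul_assoc, inv_mul_eq_div]
    exact htaylor.trans (mul_le_mul_of_nonneg_left hrpow hB)

lemma comp_Hmul_mem_polyApprox (hσ : 0 ≤ σ) (hf : MemCs k σ f) (x₀ : H3) :
    (fun x => f (Hmul x₀ x)) ∈ polyApprox σ k := by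
  have along₀ (β : List (Fin 3)) (n : ℕ) (hn : n + wordWeight β = k) :
      (fun x => wordLDeriv β f (Hmul x₀ (Hexp 0 x.1))) ∈ polyApprox σ n := by
    simpa [evalP, coords] using hf.comp_Hmul_Hexp_mem_polyApprox hσ
      (fun _ _ _ => const_mem_polyApprox σ _ _) 0 (weightedTotalDegree_X_le wH 0) zero_le_one
      (by simpa [evalP, coords, wH] using abs_fst_le_Hnorm) hn
  have along₁ (β : List (Fin 3)) (n : ℕ) (hn : n + wordWeight β = k) :
      (fun x => wordLDeriv β f (Hmul (Hmul x₀ (Hexp 0 x.1)) (Hexp 1 x.2.1))) ∈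
        polyApprox σ n := by
    simpa [evalP, coords] using hf.comp_Hmul_Hexp_mem_polyApprox hσ
      along₀ 1 (weightedTotalDegree_X_le wH 1) zero_le_one
      (by simpa [evalP, coords, wH] using abs_snd_le_Hnorm) hn
  have along₂ := hf.comp_Hmul_Hexp_mem_polyApprox hσ along₁ 2 hdeg_vertical_le zero_le_two
    (fun x => by rw [evalP_vertical_eq]; exact abs_thd_add_two_mul_le x)
    (β := []) (add_zero k)
  simpa only [evalP_vertical_eq, ← Hmul_eq_Hmul_Hexp, wordLDeriv] using along₂

theorem memCsAt (hσ : 0 < σ) (hf : MemCs k σ f) (x₀ : H3) : MemCsAt (k + σ) x₀ f := by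
  obtain ⟨P, hP, C, hC, hPC⟩ := hf.comp_Hmul_mem_polyApprox hσ.le x₀
  have hdegree : (hdeg P : ℝ) ≤ k := mod_cast hP
  refine ⟨C + 1, by positivity, 1, one_pos, P, by linarith, fun x _ => (hPC x).trans ?_⟩
  have := Hnorm_nonneg x
  gcongr
  linarith

end MemCs

/-! ### Iterated derivatives of smooth functions -/

section Smooth

open scoped ContDiff

variable {f : H3 → ℝ}

lemma lDeriv_eq_fderiv (hf : Differentiable ℝ f) (i : Fin 3) :
    lDeriv i f = fun x => fderiv ℝ f x (hvec i x) :=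
  funext fun x => (hf x).lineDeriv_eq_fderiv

lemma contDiff_hvec (i : Fin 3) : ContDiff ℝ ∞ (hvec i) := by
  unfold hvec
  split_ifs <;> fun_prop

lemma contDiff_lDeriv (hf : ContDiff ℝ ∞ f) (i : Fin 3) : ContDiff ℝ ∞ (lDeriv i f) := by
  rw [lDeriv_eq_fderiv (hf.differentiable (by simp))]
  exact (hf.fderiv_right (m := ∞) (by simp)).clm_apply (contDiff_hvec i)

lemma contDiff_wordLDeriv (hf : ContDiff ℝ ∞ f) (α : List (Fin 3)) :
    ContDiff ℝ ∞ (wordLDeriv α f) := by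
  induction α with
  | nil => exact hf
  | cons i α ih => exact contDiff_lDeriv ih i

lemma hasFieldDeriv_wordLDeriv (hf : ContDiff ℝ ∞ f) (α : List (Fin 3)) (i : Fin 3) :
    HasFieldDeriv i (wordLDeriv α f) (wordLDeriv (i :: α) f) := fun x =>
  (((contDiff_wordLDeriv hf α).differentiable (by simp)) x).lineDifferentiableAt.hasLineDerivAt

lemma hasCompactSupport_wordLDeriv (hf : ContDiff ℝ ∞ f) (hc : HasCompactSupport f)
    (α : List (Fin 3)) : HasCompactSupport (wordLDeriv α f) := by
  induction α with
  | nil => exact hc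
  | cons i α ih =>
    refine ih.mono' (Set.Subset.trans ?_ (support_fderiv_subset ℝ))
    simp only [wordLDeriv_cons]
    rw [lDeriv_eq_fderiv ((contDiff_wordLDeriv hf α).differentiable (by simp))]
    exact fun x hx h => hx (by simp [h])

lemma length_le_wordWeight (α : List (Fin 3)) : α.length ≤ wordWeight α := by
  induction α with
  | nil => simp
  | cons i α ih =>
    rw [wordWeight_cons, List.length_cons]
    have := wH_pos i
    lia

lemma finite_setOf_wordWeight_le (n : ℕ) : {α | wordWeight α ≤ n}.Finite :=
  (List.finite_length_le (Fin 3) n).subset fun α hα => (length_le_wordWeight α).trans hα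

lemma exists_abs_wordLDeriv_le (hf : ContDiff ℝ ∞ f) (hc : HasCompactSupport f) (n : ℕ) :
    ∃ M, 0 ≤ M ∧ ∀ α, wordWeight α ≤ n → ∀ x, |wordLDeriv α f x| ≤ M := by
  choose M hM using fun α => (contDiff_wordLDeriv hf α).continuous.bounded_above_of_compact_support
    (hasCompactSupport_wordLDeriv hf hc α)
  obtain ⟨B, hB⟩ := ((finite_setOf_wordWeight_le n).image M).bddAbove
  exact ⟨|B|, abs_nonneg B, fun α hα x =>
    (hM α x).trans ((hB (Set.mem_image_of_mem M hα)).trans (le_abs_self B))⟩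

end Smooth

lemma wordLDeriv_eventuallyEq {f g : H3 → ℝ} {x : H3} (h : f =ᶠ[nhds x] g) (α : List (Fin 3)) :
    wordLDeriv α f =ᶠ[nhds x] wordLDeriv α g := by
  induction α with
  | nil => exact h
  | cons i α ih =>
    filter_upwards [ih.eventuallyEq_nhds] with y hy
    exact hy.lineDeriv_eq

lemma lDeriv_eq_deriv (i : Fin 3) (f : H3 → ℝ) (x : H3) :
    lDeriv i f x = deriv (fun t => f (Hmul x (Hexp i t))) 0 := by
  simp only [lDeriv, lineDeriv, add_smul_hvec]

lemma wordLDeriv_const_mul (α : List (Fin 3)) (c : ℝ) (f : H3 → ℝ) :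
    wordLDeriv α (fun x => c * f x) = fun x => c * wordLDeriv α f x := by
  induction α with
  | nil => rfl
  | cons i α ih =>
    funext x
    simp only [wordLDeriv, ih, lDeriv_eq_deriv]
    exact deriv_const_mul_field c

lemma wordLDeriv_comp_Hmul (α : List (Fin 3)) (f : H3 → ℝ) (a : H3) :
    wordLDeriv α (fun x => f (Hmul a x)) = fun x => wordLDeriv α f (Hmul a x) := by
  induction α with
  | nil => rfl
  | cons i α ih =>
    funext x
    simp only [wordLDeriv, ih, lDeriv_eq_deriv, Hmul_assoc]

lemma wordLDeriv_comp_Hdil (α : List (Fin 3)) (f : H3 → ℝ) (l : ℝ) :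
    wordLDeriv α (fun x => f (Hdil l x)) =
      fun x => l ^ wordWeight α * wordLDeriv α f (Hdil l x) := by
  induction α with
  | nil => simp [wordLDeriv, wordWeight]
  | cons i α ih =>
    funext x
    have chain := deriv_comp_mul_left (l ^ wH i)
      (fun t => wordLDeriv α f (Hmul (Hdil l x) (Hexp i t))) 0
    simp only [wordLDeriv, ih, lDeriv_eq_deriv, deriv_const_mul_field, Hdil_Hmul, Hdil_Hexp]
    rw [chain, wordWeight_cons, mul_zero, smul_eq_mul, pow_add]
    ring

/-! ### Differences and the norm of `C^s` -/

namespace MemCs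

variable {k : ℕ} {σ : ℝ} {f g : H3 → ℝ}

lemma wordLDeriv_sub (hf : MemCs k σ f) (hg : MemCs k σ g) {α : List (Fin 3)}
    (hα : wordWeight α ≤ k) :
    wordLDeriv α (fun x => f x - g x) = fun x => wordLDeriv α f x - wordLDeriv α g x := by
  induction α with
  | nil => rfl
  | cons i α ih =>
    rw [wordLDeriv_cons, ih (by rw [wordWeight_cons] at hα; lia)]
    exact ((hf.hasFieldDeriv hα).sub (hg.hasFieldDeriv hα)).lDeriv_eq

lemma sub (hf : MemCs k σ f) (hg : MemCs k σ g) : MemCs k σ (fun x => f x - g x) := by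
  refine ⟨fun α i hα x => ?_, fun α hα => ?_, ?_⟩
  · rw [hf.wordLDeriv_sub hg (by rw [wordWeight_cons] at hα; lia)]
    exact ((hf.hasFieldDeriv hα).sub (hg.hasFieldDeriv hα) x).lineDifferentiableAt
  · rw [hf.wordLDeriv_sub hg hα]
    obtain ⟨hfc, M, hM⟩ := hf.2.1 α hα
    obtain ⟨hgc, N, hN⟩ := hg.2.1 α hα
    exact ⟨hfc.sub hgc, M + N, fun x => (abs_sub _ _).trans (add_le_add (hM x) (hN x))⟩
  · obtain ⟨M, hM⟩ := hf.2.2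
    obtain ⟨N, hN⟩ := hg.2.2
    refine ⟨M + N, fun α hα x y => ?_⟩
    rw [hf.wordLDeriv_sub hg hα.le, add_mul, sub_sub_sub_comm]
    exact (abs_sub _ _).trans (add_le_add (hM α hα x y) (hN α hα x y))

lemma abs_wordLDeriv_sub_le (hf : MemCs k σ f) {α : List (Fin 3)} (hα : wordWeight α = k)
    {x y : H3} (hxy : 0 < Hdist x y) (hne : x ≠ y) :
    |wordLDeriv α f x - wordLDeriv α f y| ≤ holderSemi k σ f * Hdist x y ^ σ := by
  obtain ⟨M, hM⟩ := hf.2.2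
  rw [← div_le_iff₀ (Real.rpow_pos_of_pos hxy σ)]
  refine le_csSup ⟨|M|, ?_⟩ ⟨α, x, y, hα, hne, rfl⟩
  rintro w ⟨β, u, v, hβ, -, rfl⟩
  have hdist : 0 ≤ Hdist u v ^ σ := Real.rpow_nonneg (Hnorm_nonneg _) σ
  exact div_le_of_le_mul₀ hdist (abs_nonneg M)
    ((hM β hβ u v).trans (mul_le_mul_of_nonneg_right (le_abs_self M) hdist))

end MemCs

lemma holderSemi_le_CsNorm (k : ℕ) (σ : ℝ) (f : H3 → ℝ) : holderSemi k σ f ≤ CsNorm k σ f := by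
  refine le_add_of_nonneg_left (Finset.sum_nonneg fun n _ => Finset.sum_nonneg fun v _ => ?_)
  split_ifs
  · exact Real.sSup_nonneg (Set.forall_mem_range.2 fun x => abs_nonneg _)
  · exact le_rfl

/-! ### Finite differences along the field `X` -/

lemma abs_fwdDiff_iter_le {f : ℝ → ℝ} {h y B : ℝ} (m : ℕ)
    (hB : ∀ i ≤ m, |f (y + i * h)| ≤ B) : |(fwdDiff h)^[m] f y| ≤ 2 ^ m * B := by
  have hsum : (∑ i ∈ Finset.range (m + 1), (m.choose i : ℝ)) = 2 ^ m := mod_cast m.sum_range_choose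
  rw [fwdDiff_iter_eq_sum_shift, ← hsum, Finset.sum_mul]
  refine (Finset.abs_sum_le_sum_abs _ _).trans (Finset.sum_le_sum fun i hi => ?_)
  simpa [abs_mul] using
    mul_le_mul_of_nonneg_left (hB i (Finset.mem_range_succ_iff.1 hi)) (m.choose i).cast_nonneg

lemma abs_fwdDiff_iter_le_of_hasDerivAt {h B : ℝ} (hh : 0 ≤ h) {m : ℕ} {v : ℕ → ℝ → ℝ}
    (hv : ∀ j < m, ∀ t, HasDerivAt (v j) (v (j + 1) t) t) {y : ℝ}
    (hB : ∀ t ∈ Set.Icc y (y + m * h), |v m t| ≤ B) : |(fwdDiff h)^[m] (v 0) y| ≤ h ^ m * B := by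
  induction m generalizing v B with
  | zero => simpa using hB
  | succ m ih =>
    rw [Function.iterate_succ_apply, pow_succ, mul_assoc]
    refine ih (v := fun j => fwdDiff h (v j)) (fun j hj t => ?_) fun t ht => ?_
    · exact ((hv j (by lia) (t + h)).comp_add_const t h).sub (hv j (by lia) t)
    · have hsub : Set.Icc t (t + h) ⊆ Set.Icc y (y + (m + 1 : ℕ) * h) := by
        refine Set.Icc_subset_Icc ht.1 ?_
        push_cast
        linarith [ht.2]
      have hmean := (convex_Icc t (t + h)).norm_image_sub_le_of_norm_hasDerivWithin_le
        (fun u _ => (hv m m.lt_succ_self u).hasDerivWithinAt) (fun u hu => hB u (hsub hu))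
        (Set.left_mem_Icc.2 (by linarith)) (Set.right_mem_Icc.2 (by linarith))
      simpa [fwdDiff, abs_of_nonneg hh, mul_comm] using hmean

/-- The finite difference of order `m` and step `r` at `y`, along the integral curve
`t ↦ y * exp(tX)` of the field `X`, as a linear functional. -/
def Xdiff (m : ℕ) (r : ℝ) (y : H3) : (H3 → ℝ) →ₗ[ℝ] ℝ where
  toFun f := (fwdDiff r)^[m] (fun t => f (Hmul y (Hexp 0 t))) 0
  map_add' f _ := congrFun (fwdDiff_iter_add r (fun t => f (Hmul y (Hexp 0 t))) _ m) 0
  map_smul' c f := congrFun (fwdDiff_iter_const_smul r c (fun t => f (Hmul y (Hexp 0 t))) m) 0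

lemma Xdiff_apply (m : ℕ) (r : ℝ) (y : H3) (f : H3 → ℝ) :
    Xdiff m r y f = (fwdDiff r)^[m] (fun t => f (Hmul y (Hexp 0 t))) 0 := rfl

lemma Xdiff_Hmul (m : ℕ) (r : ℝ) (x y : H3) (f : H3 → ℝ) :
    Xdiff m r (Hmul x y) f = Xdiff m r y (fun z => f (Hmul x z)) := by
  simp only [Xdiff_apply, Hmul_assoc]

lemma abs_Xdiff_le {m : ℕ} {r : ℝ} {y : H3} {f : H3 → ℝ} {B : ℝ}
    (hB : ∀ i ≤ m, |f (Hmul y (Hexp 0 (i * r)))| ≤ B) : |Xdiff m r y f| ≤ 2 ^ m * B :=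
  abs_fwdDiff_iter_le m (by simpa using hB)

lemma Hnorm_Hmul_Hexp_zero_le (y : H3) (t : ℝ) : Hnorm (Hmul y (Hexp 0 t)) ≤ Hnorm y + |t| := by
  simpa [Hnorm_Hexp, wH] using Hnorm_Hmul_le y (Hexp 0 t)

lemma wordWeight_replicate_zero (n : ℕ) : wordWeight (List.replicate n 0) = n := by
  simp [wordWeight]

lemma MemCs.abs_Xdiff_le {k : ℕ} {σ : ℝ} {f : H3 → ℝ} (hf : MemCs k σ f) {r : ℝ} (hr : 0 < r)
    (y : H3) : |Xdiff (k + 1) r y f| ≤ CsNorm k σ f * r ^ (k + σ) := by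
  have hdiff (t : ℝ) : |fwdDiff r (fun t => wordLDeriv (List.replicate k 0) f
      (Hmul y (Hexp 0 t))) t| ≤ holderSemi k σ f * r ^ σ := by
    have hdist : Hdist (Hmul y (Hexp 0 t)) (Hmul y (Hexp 0 (t + r))) = r := by
      simp [Hmul_Hexp_add, Hdist_Hmul_left, Hnorm_Hexp, wH, abs_of_pos hr]
    have hne : Hmul y (Hexp 0 t) ≠ Hmul y (Hexp 0 (t + r)) := fun h =>
      hr.ne' (by simpa [Hmul, Hexp] using congrArg Prod.fst h)
    simpa [fwdDiff, abs_sub_comm, hdist] using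
      hf.abs_wordLDeriv_sub_le (wordWeight_replicate_zero k) (hdist.symm ▸ hr) hne
  have hderiv : ∀ j < k, ∀ t, HasDerivAt
      (fwdDiff r fun t => wordLDeriv (List.replicate j 0) f (Hmul y (Hexp 0 t)))
      (fwdDiff r (fun t => wordLDeriv (List.replicate (j + 1) 0) f (Hmul y (Hexp 0 t))) t) t := by
    intro j hj t
    have hfield := hf.hasFieldDeriv (α := List.replicate j 0) (i := 0)
      ((wordWeight_replicate_zero (j + 1)).trans_le hj)
    exact ((hfield.hasDerivAt y (t + r)).comp_add_const t r).sub (hfield.hasDerivAt y t)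
  calc |Xdiff (k + 1) r y f| ≤ r ^ k * (holderSemi k σ f * r ^ σ) :=
        abs_fwdDiff_iter_le_of_hasDerivAt hr.le hderiv fun t _ => hdiff t
    _ ≤ r ^ k * (CsNorm k σ f * r ^ σ) := by gcongr; exact holderSemi_le_CsNorm k σ f
    _ = CsNorm k σ f * r ^ (k + σ) := by rw [Real.rpow_add hr, Real.rpow_natCast]; ring

lemma exists_abs_le_of_Hnorm_le {F : H3 → ℝ} (hF : Continuous F) (R : ℝ) :
    ∃ C, 0 ≤ C ∧ ∀ x, Hnorm x ≤ R → |F x| ≤ C := by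
  obtain ⟨C, hC⟩ := (isCompact_closedBall (0 : H3) (R + R ^ 2)).exists_bound_of_continuousOn
    hF.continuousOn
  refine ⟨|C|, abs_nonneg C, fun x hx => (hC x ?_).trans (le_abs_self C)⟩
  have hx₀ := Hnorm_nonneg x
  have hsq : Hnorm x ^ 2 ≤ R ^ 2 := by gcongr
  rw [mem_closedBall_zero_iff, Prod.norm_def, Prod.norm_def]
  refine max_le ?_ (max_le ?_ ?_)
  · exact (abs_fst_le_Hnorm x).trans (by nlinarith)
  · exact (abs_snd_le_Hnorm x).trans (by nlinarith)
  · exact (abs_thd_le_Hnorm_sq x).trans (by nlinarith)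

lemma exists_abs_Xdiff_le_of_contDiff {F : H3 → ℝ} (hF : ContDiff ℝ (⊤ : ℕ∞) F) (m : ℕ) (R : ℝ) :
    ∃ C, 0 ≤ C ∧ ∀ r, 0 ≤ r → r ≤ 1 → ∀ z, Hnorm z ≤ R → |Xdiff m r z F| ≤ C * r ^ m := by
  obtain ⟨C, hC, hFC⟩ := exists_abs_le_of_Hnorm_le
    (contDiff_wordLDeriv hF (List.replicate m 0)).continuous (R + m)
  refine ⟨C, hC, fun r hr hr1 z hz => ?_⟩
  rw [mul_comm]
  refine abs_fwdDiff_iter_le_of_hasDerivAt hr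
    (v := fun j t => wordLDeriv (List.replicate j 0) F (Hmul z (Hexp 0 t)))
    (fun j _ => (hasFieldDeriv_wordLDeriv hF (List.replicate j 0) 0).hasDerivAt z)
    fun t ht => hFC _ ((Hnorm_Hmul_Hexp_zero_le z t).trans (add_le_add hz ?_))
  rw [abs_of_nonneg ht.1]
  nlinarith [ht.2, m.cast_nonneg (α := ℝ)]

lemma contDiff_evalP (P : MvPolynomial (Fin 3) ℝ) : ContDiff ℝ (⊤ : ℕ∞) (evalP P) := by
  have hcoords : ContDiff ℝ (⊤ : ℕ∞) coords := by
    refine contDiff_pi.2 fun i => ?_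
    fin_cases i
    exacts [contDiff_fst, contDiff_snd.fst, contDiff_snd.snd]
  have heval : ContDiff ℝ (⊤ : ℕ∞) fun v => MvPolynomial.eval v P := contDiffOn_univ.1
    ((AnalyticOnNhd.eval_mvPolynomial P).contDiffOn uniqueDiffOn_univ)
  exact heval.comp hcoords

/-! ### Functions with large finite differences -/

section LargeXdiff

open scoped Topology

lemma MemCsAt.exists_abs_Xdiff_le {t : ℝ} (ht : 0 ≤ t) {x₀ : H3} {f : H3 → ℝ}
    (hf : MemCsAt t x₀ f) (m : ℕ) {A : ℝ} (hA : 0 ≤ A) :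
    ∃ C, 0 ≤ C ∧ ∀ᶠ r in 𝓝[>] 0, ∀ z, Hnorm z ≤ A * r →
      |Xdiff m r (Hmul x₀ z) f| ≤ C * (r ^ t + r ^ m) := by
  obtain ⟨C, hC, η, hη, P, -, hP⟩ := hf
  obtain ⟨D, hD, hPD⟩ := exists_abs_Xdiff_le_of_contDiff (contDiff_evalP P) m A
  refine ⟨2 ^ m * (C * (A + m) ^ t) + D, by positivity, ?_⟩
  have small : ∀ᶠ r in 𝓝[>] (0 : ℝ), (A + m) * r < η ∧ r < 1 := by
    have hlim : Filter.Tendsto (fun r => (A + m) * r) (𝓝 0) (𝓝 0) := by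
      simpa using (continuous_const_mul (A + m)).tendsto 0
    exact ((hlim.eventually_lt_const hη).and (Iio_mem_nhds one_pos)).filter_mono
      nhdsWithin_le_nhds
  filter_upwards [small, self_mem_nhdsWithin] with r ⟨hrη, hr1⟩ (hr : 0 < r) z hz
  have hdiff : |Xdiff m r z ((fun x => f (Hmul x₀ x)) - evalP P)| ≤
      2 ^ m * (C * ((A + m) * r) ^ t) := by
    refine abs_Xdiff_le fun i hi => ?_
    have hnorm : Hnorm (Hmul z (Hexp 0 (i * r))) ≤ (A + m) * r := by
      refine (Hnorm_Hmul_Hexp_zero_le z _).trans ?_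
      rw [abs_of_nonneg (by positivity), add_mul]
      gcongr
    have := Hnorm_nonneg (Hmul z (Hexp 0 (i * r)))
    exact (hP _ (hnorm.trans_lt hrη)).trans (by gcongr)
  have hpoly := hPD r hr.le hr1.le z (hz.trans (mul_le_of_le_one_right hA hr1.le))
  rw [map_sub, Real.mul_rpow (by positivity) hr.le] at hdiff
  have hcross : 0 ≤ 2 ^ m * (C * (A + m) ^ t) * r ^ m + D * r ^ t := by positivity
  rw [Xdiff_Hmul]
  linarith [abs_sub_abs_le_abs_sub (Xdiff m r z fun x => f (Hmul x₀ x)) (Xdiff m r z (evalP P))]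

/-- Near every point `f` has, at arbitrarily small scales `r`, finite differences of order `m`
along `X` of size at least `c * r ^ s`. Such differences cannot be absorbed by the polynomial
approximating `f` when `s < m`, hence they bound every pointwise exponent by `s`. -/
def HasLargeXdiff (m : ℕ) (s : ℝ) (f : H3 → ℝ) : Prop :=
  ∃ c > 0, ∃ A > 0, ∀ x₀ : H3, ∃ᶠ r in 𝓝[>] (0 : ℝ), ∃ z, Hnorm z ≤ A * r ∧
    c * r ^ s ≤ |Xdiff m r (Hmul x₀ z) f|

lemma tendsto_rpow_nhdsGT_zero {u : ℝ} (hu : 0 < u) :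
    Filter.Tendsto (fun r : ℝ => r ^ u) (𝓝[>] 0) (𝓝 0) := by
  simpa [Real.zero_rpow hu.ne'] using
    (Real.continuousAt_rpow_const 0 u (Or.inr hu.le)).tendsto.mono_left nhdsWithin_le_nhds

lemma HasLargeXdiff.le_of_memCsAt {m : ℕ} {s t : ℝ} {f : H3 → ℝ} (hf : HasLargeXdiff m s f)
    (hs : 0 ≤ s) (hsm : s < m) {x₀ : H3} (ht : MemCsAt t x₀ f) : t ≤ s := by
  obtain ⟨c, hc, A, hA, hlarge⟩ := hf
  by_contra! hst
  obtain ⟨C, -, hsmall⟩ := ht.exists_abs_Xdiff_le (hs.trans hst.le) m hA.le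
  have hlim : Filter.Tendsto (fun r : ℝ => C * (r ^ (t - s) + r ^ (m - s))) (𝓝[>] 0) (𝓝 0) := by
    simpa using ((tendsto_rpow_nhdsGT_zero (sub_pos.2 hst)).add
      (tendsto_rpow_nhdsGT_zero (sub_pos.2 hsm))).const_mul C
  obtain ⟨r, ⟨z, hz, hle⟩, hge, hlt, hr⟩ := ((hlarge x₀).and_eventually
    (hsmall.and ((hlim.eventually_lt_const hc).and self_mem_nhdsWithin))).exists
  have hr : 0 < r := hr
  have : c * r ^ s < c * r ^ s := calc
    c * r ^ s ≤ C * (r ^ t + r ^ m) := hle.trans (hge z hz)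
    _ = C * (r ^ (t - s) + r ^ (m - s)) * r ^ s := by
      rw [mul_assoc, add_mul, ← Real.rpow_add hr, ← Real.rpow_add hr, sub_add_cancel,
        sub_add_cancel, Real.rpow_natCast]
    _ < c * r ^ s := by gcongr
  exact this.false

end LargeXdiff

/-- The generic set: the functions of `C^s(ℍ)`, `s = k + σ`, with differences of order `k + 1`
as large as the exponent `s` allows. -/
def genericSet (k : ℕ) (σ : ℝ) : Set (H3 → ℝ) :=
  {f | MemCs k σ f ∧ HasLargeXdiff (k + 1) (k + σ) f}

lemma exists_forall_CsNorm_lt_mem_genericSet {k : ℕ} {σ : ℝ} {f : H3 → ℝ}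
    (hf : f ∈ genericSet k σ) : ∃ ε : ℝ, 0 < ε ∧ ∀ g, MemCs k σ g →
      CsNorm k σ (fun x => f x - g x) < ε → g ∈ genericSet k σ := by
  obtain ⟨hfCs, c, hc, A, hA, hlarge⟩ := hf
  refine ⟨c / 2, half_pos hc, fun g hg hfg => ⟨hg, c / 2, half_pos hc, A, hA, fun x₀ => ?_⟩⟩
  refine ((hlarge x₀).and_eventually self_mem_nhdsWithin).mono ?_
  rintro r ⟨⟨z, hz, hle⟩, hr : 0 < r⟩
  refine ⟨z, hz, ?_⟩
  have hclose : |Xdiff (k + 1) r (Hmul x₀ z) f - Xdiff (k + 1) r (Hmul x₀ z) g| ≤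
      c / 2 * r ^ (k + σ) := by
    rw [← map_sub]
    exact ((hfCs.sub hg).abs_Xdiff_le hr _).trans (by gcongr)
  linarith [abs_sub_abs_le_abs_sub (Xdiff (k + 1) r (Hmul x₀ z) f) (Xdiff (k + 1) r (Hmul x₀ z) g)]

lemma holderExponent_eq_of_mem_genericSet {k : ℕ} {σ : ℝ} (hσ₀ : 0 < σ) (hσ₁ : σ < 1)
    {f : H3 → ℝ} (hf : f ∈ genericSet k σ) (x₀ : H3) : holderExponent f x₀ = k + σ := by
  have hgreatest : IsGreatest {t : ℝ | 0 < t ∧ MemCsAt t x₀ f} (k + σ) :=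
    ⟨⟨by positivity, hf.1.memCsAt hσ₀ x₀⟩, fun t ht =>
      hf.2.le_of_memCsAt (by positivity) (by push_cast; linarith) ht.2⟩
  exact hgreatest.csSup_eq

/-! ### Sums of lacunary powers -/

lemma summable_pow_natAbs {q : ℝ} (hq₀ : 0 ≤ q) (hq₁ : q < 1) :
    Summable fun j : ℤ => q ^ j.natAbs :=
  .of_nat_of_neg (by simpa using summable_geometric_of_lt_one hq₀ hq₁)
    (by simpa using summable_geometric_of_lt_one hq₀ hq₁)

lemma min_rpow_le_pow_natAbs {L a b : ℝ} (hL : 1 < L) (ha : 0 ≤ a) (hb : 0 ≤ b) {x : ℝ} {j : ℤ}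
    (hj : L ^ j ≤ x) (hj' : x < L ^ (j + 1)) :
    min (x ^ a) (x ^ (-b)) ≤ L ^ a * (L ^ (-min a b)) ^ j.natAbs := by
  have hL₀ : 0 < L := one_pos.trans hL
  have hx : 0 < x := (zpow_pos hL₀ j).trans_le hj
  rw [← Real.rpow_natCast, ← Real.rpow_mul hL₀.le, ← Real.rpow_add hL₀]
  rw [← Real.rpow_intCast] at hj hj'
  rcases le_total 0 j with h | h
  · have hcast : (j.natAbs : ℝ) = j := by rw [Nat.cast_natAbs, abs_of_nonneg h]
    refine (min_le_right _ _).trans ((Real.rpow_le_rpow_of_nonpos (by positivity) hj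
      (neg_nonpos.2 hb)).trans ?_)
    rw [← Real.rpow_mul hL₀.le, hcast]
    refine Real.rpow_le_rpow_of_exponent_le hL.le ?_
    have : (0 : ℝ) ≤ j := mod_cast h
    nlinarith [min_le_right a b]
  · have hcast : (j.natAbs : ℝ) = -j := by
      rw [Nat.cast_natAbs, abs_of_nonpos h, Int.cast_neg]
    refine (min_le_left _ _).trans ((Real.rpow_le_rpow hx.le hj'.le ha).trans ?_)
    rw [← Real.rpow_mul hL₀.le, hcast]
    refine Real.rpow_le_rpow_of_exponent_le hL.le ?_
    have : (j : ℝ) ≤ 0 := mod_cast h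
    push_cast
    nlinarith [min_le_left a b]

lemma exists_tsum_min_rpow_le {L a b : ℝ} (hL : 1 < L) (ha : 0 < a) (hb : 0 < b) :
    ∃ C, 0 ≤ C ∧ ∀ d, 0 < d →
      Summable (fun n : ℕ => min ((L ^ n * d) ^ a) ((L ^ n * d) ^ (-b))) ∧
      ∑' n : ℕ, min ((L ^ n * d) ^ a) ((L ^ n * d) ^ (-b)) ≤ C := by
  have hL₀ : 0 < L := one_pos.trans hL
  set q : ℝ := L ^ (-min a b)
  have hq : q < 1 := Real.rpow_lt_one_of_one_lt_of_neg hL (neg_lt_zero.2 (lt_min ha hb))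
  have hsum : Summable fun j : ℤ => L ^ a * q ^ j.natAbs :=
    (summable_pow_natAbs (by positivity) hq).mul_left _
  refine ⟨∑' j : ℤ, L ^ a * q ^ j.natAbs, tsum_nonneg fun _ => by positivity, fun d hd => ?_⟩
  obtain ⟨j, hj⟩ := exists_mem_Ico_zpow hd hL
  have hinj : Function.Injective fun n : ℕ => (n + j : ℤ) := fun m n h => by simpa using h
  have hterm (n : ℕ) : min ((L ^ n * d) ^ a) ((L ^ n * d) ^ (-b)) ≤
      L ^ a * q ^ (n + j : ℤ).natAbs := by
    refine min_rpow_le_pow_natAbs hL ha.le hb.le ?_ ?_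
    · rw [zpow_add₀ hL₀.ne', zpow_natCast]
      gcongr
      exact hj.1
    · rw [add_assoc, zpow_add₀ hL₀.ne', zpow_natCast]
      gcongr
      exact hj.2
  have hsum' := hsum.comp_injective hinj
  have hsummable := Summable.of_nonneg_of_le (fun n => by positivity) hterm hsum'
  exact ⟨hsummable, (hsummable.tsum_le_tsum hterm hsum').trans
    (tsum_comp_le_tsum_of_inj hsum (fun _ => by positivity) hinj)⟩

lemma summable_pow_rpow {L u : ℝ} (hL : 1 < L) (hu : u < 0) :
    Summable fun n : ℕ => (L ^ n) ^ u := by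
  have hL₀ : 0 < L := one_pos.trans hL
  simp only [← Real.rpow_pow_comm hL₀.le]
  exact summable_geometric_of_lt_one (by positivity) (Real.rpow_lt_one_of_one_lt_of_neg hL hu)

/-! ### Lacunary series -/

lemma abs_sub_Hmul_le_of_hasFieldDeriv {f : H3 → ℝ} {g : Fin 3 → H3 → ℝ}
    (hf : ∀ i, HasFieldDeriv i f (g i)) {B l : ℝ} (hB : 0 ≤ B) (hl : 0 ≤ l)
    (hg : ∀ i x, |g i x| ≤ B * l ^ wH i) (x z : H3) :
    |f (Hmul x z) - f x| ≤ 2 * B * (l * Hnorm z + (l * Hnorm z) ^ 2) := by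
  set x₁ := Hmul x (Hexp 0 z.1)
  set x₂ := Hmul x₁ (Hexp 1 z.2.1)
  set τ := z.2.2 + 2 * (z.1 * z.2.1)
  have hz : Hmul x z = Hmul x₂ (Hexp 2 τ) := by
    rw [Hmul_eq_Hmul_Hexp]
  have h₀ : |f x₁ - f x| ≤ B * l * Hnorm z := by
    refine ((hf 0).abs_sub_le (hg 0) x z.1).trans ?_
    rw [show wH 0 = 1 from rfl, pow_one]
    gcongr
    exact abs_fst_le_Hnorm z
  have h₁ : |f x₂ - f x₁| ≤ B * l * Hnorm z := by
    refine ((hf 1).abs_sub_le (hg 1) x₁ z.2.1).trans ?_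
    rw [show wH 1 = 1 from rfl, pow_one]
    gcongr
    exact abs_snd_le_Hnorm z
  have h₂ : |f (Hmul x z) - f x₂| ≤ B * l ^ 2 * (2 * Hnorm z ^ 2) := by
    rw [hz]
    refine ((hf 2).abs_sub_le (hg 2) x₂ τ).trans ?_
    rw [show wH 2 = 2 from rfl]
    gcongr
    exact abs_thd_add_two_mul_le z
  linarith [abs_sub_le (f (Hmul x z)) (f x₂) (f x), abs_sub_le (f x₂) (f x₁) (f x)]

lemma Hmul_eq_of_Hnorm_eq_zero (x : H3) {z : H3} (hz : Hnorm z = 0) : Hmul x z = x := by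
  have h₀ := abs_fst_le_Hnorm z
  have h₁ := abs_snd_le_Hnorm z
  have h₂ := abs_thd_le_Hnorm_sq z
  rw [hz, zero_pow two_ne_zero] at h₂
  rw [hz] at h₀ h₁
  simp [Hmul, abs_nonpos_iff.1 h₀, abs_nonpos_iff.1 h₁, abs_nonpos_iff.1 h₂]

/-- `T n` is a smooth function at scale `L ^ (-n)`, of the size allowed in `C^s(ℍ)`, `s = k + σ`.
Derivatives of order `k + 2` are controlled because one vertical derivative has weight `2`. -/
structure IsLacunary (L : ℝ) (k : ℕ) (σ B : ℝ) (T : ℕ → H3 → ℝ) : Prop where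
  contDiff : ∀ n, ContDiff ℝ (⊤ : ℕ∞) (T n)
  abs_wordLDeriv_le : ∀ n α, wordWeight α ≤ k + 2 → ∀ x,
    |wordLDeriv α (T n) x| ≤ B * (L ^ n) ^ (wordWeight α - (k + σ))

namespace IsLacunary

variable {L σ B : ℝ} {k : ℕ} {T : ℕ → H3 → ℝ} {α : List (Fin 3)}

lemma nonneg (h : IsLacunary L k σ B T) : 0 ≤ B := by
  simpa using (abs_nonneg _).trans (h.abs_wordLDeriv_le 0 [] (by simp [wordWeight]) 0)

lemma abs_wordLDeriv_le_rpow_neg (h : IsLacunary L k σ B T) (hL : 1 < L) (hα : wordWeight α ≤ k)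
    (n : ℕ) (x : H3) : |wordLDeriv α (T n) x| ≤ B * (L ^ n) ^ (-σ) := by
  have hB := h.nonneg
  have hα' : (wordWeight α : ℝ) ≤ k := mod_cast hα
  refine (h.abs_wordLDeriv_le n α (by lia) x).trans ?_
  gcongr
  · exact one_le_pow₀ hL.le
  · linarith

lemma summable_bound (hL : 1 < L) (hσ : 0 < σ) (B : ℝ) :
    Summable fun n : ℕ => B * (L ^ n) ^ (-σ) :=
  (summable_pow_rpow hL (neg_lt_zero.2 hσ)).mul_left B

lemma summable_wordLDeriv (h : IsLacunary L k σ B T) (hL : 1 < L) (hσ : 0 < σ)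
    (hα : wordWeight α ≤ k) (x : H3) : Summable fun n => wordLDeriv α (T n) x :=
  .of_norm_bounded (summable_bound hL hσ B) fun n => h.abs_wordLDeriv_le_rpow_neg hL hα n x

lemma hasFieldDeriv_tsum (h : IsLacunary L k σ B T) (hL : 1 < L) (hσ : 0 < σ) {i : Fin 3}
    (hα : wordWeight (i :: α) ≤ k) :
    HasFieldDeriv i (fun x => ∑' n, wordLDeriv α (T n) x)
      (fun x => ∑' n, wordLDeriv (i :: α) (T n) x) := by
  have hα' : wordWeight α ≤ k := by rw [wordWeight_cons] at hα; lia
  intro x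
  have := hasDerivAt_tsum (g := fun n t => wordLDeriv α (T n) (Hmul x (Hexp i t)))
    (summable_bound hL hσ B)
    (fun n t => (hasFieldDeriv_wordLDeriv (h.contDiff n) α i).hasDerivAt x t)
    (fun n t => h.abs_wordLDeriv_le_rpow_neg hL hα n _) (y₀ := 0)
    (h.summable_wordLDeriv hL hσ hα' _) 0
  simpa only [HasLineDerivAt, add_smul_hvec, Hmul_Hexp_zero] using this

lemma wordLDeriv_tsum (h : IsLacunary L k σ B T) (hL : 1 < L) (hσ : 0 < σ)
    (hα : wordWeight α ≤ k) :
    wordLDeriv α (fun x => ∑' n, T n x) = fun x => ∑' n, wordLDeriv α (T n) x := by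
  induction α with
  | nil => rfl
  | cons i α ih =>
    rw [wordLDeriv_cons, ih (by rw [wordWeight_cons] at hα; lia)]
    exact (h.hasFieldDeriv_tsum hL hσ hα).lDeriv_eq

lemma abs_wordLDeriv_tsum_le (h : IsLacunary L k σ B T) (hL : 1 < L) (hσ : 0 < σ)
    (hα : wordWeight α ≤ k) (x : H3) :
    |wordLDeriv α (fun x => ∑' n, T n x) x| ≤ (∑' n : ℕ, (L ^ n) ^ (-σ)) * B := by
  rw [h.wordLDeriv_tsum hL hσ hα, mul_comm]
  exact tsum_of_norm_bounded (f := fun n => wordLDeriv α (T n) x)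
    ((summable_pow_rpow hL (neg_lt_zero.2 hσ)).hasSum.mul_left B)
    fun n => h.abs_wordLDeriv_le_rpow_neg hL hα n x

lemma continuous_wordLDeriv_tsum (h : IsLacunary L k σ B T) (hL : 1 < L) (hσ : 0 < σ)
    (hα : wordWeight α ≤ k) : Continuous (wordLDeriv α fun x => ∑' n, T n x) := by
  rw [h.wordLDeriv_tsum hL hσ hα]
  refine continuous_tsum (fun n => (contDiff_wordLDeriv (h.contDiff n) α).continuous)
    (summable_bound hL hσ B) fun n x => ?_
  exact h.abs_wordLDeriv_le_rpow_neg hL hα n x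

lemma abs_wordLDeriv_sub_le (h : IsLacunary L k σ B T) (hL : 1 < L) (hα : wordWeight α = k)
    (n : ℕ) (x : H3) {z : H3} (hz : 0 < Hnorm z) :
    |wordLDeriv α (T n) (Hmul x z) - wordLDeriv α (T n) x| ≤ 4 * B * Hnorm z ^ σ *
      min ((L ^ n * Hnorm z) ^ (1 - σ)) ((L ^ n * Hnorm z) ^ (-σ)) := by
  have hB := h.nonneg
  have hLn : 0 < L ^ n := pow_pos (one_pos.trans hL) n
  set u := L ^ n * Hnorm z with hu
  have hu₀ : 0 < u := by positivity
  set c := B * (L ^ n) ^ (-σ) with hc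
  have hcz : c = B * Hnorm z ^ σ * u ^ (-σ) := by
    rw [hc, hu, Real.mul_rpow hLn.le hz.le, mul_mul_mul_comm, ← Real.rpow_add hz]
    simp
  have hderiv (i : Fin 3) (y : H3) : |wordLDeriv (i :: α) (T n) y| ≤ c * (L ^ n) ^ wH i := by
    have hi : wH i ≤ 2 := by fin_cases i <;> simp [wH]
    refine (h.abs_wordLDeriv_le n (i :: α) (by rw [wordWeight_cons]; lia) y).trans_eq ?_
    rw [hc, mul_assoc, ← Real.rpow_add_natCast hLn.ne', wordWeight_cons, hα]
    congr 2
    push_cast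
    ring
  have hsmooth := abs_sub_Hmul_le_of_hasFieldDeriv (hasFieldDeriv_wordLDeriv (h.contDiff n) α)
    (by positivity) hLn.le hderiv x z
  have htriv : |wordLDeriv α (T n) (Hmul x z) - wordLDeriv α (T n) x| ≤ 2 * c := by
    linarith [abs_sub (wordLDeriv α (T n) (Hmul x z)) (wordLDeriv α (T n) x),
      h.abs_wordLDeriv_le_rpow_neg hL hα.le n (Hmul x z),
      h.abs_wordLDeriv_le_rpow_neg hL hα.le n x]
  have hc₀ : 0 ≤ c := by positivity
  have hmin : min (u ^ (1 - σ)) (u ^ (-σ)) = u ^ (-σ) * min u 1 := by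
    rw [mul_min_of_nonneg _ _ (by positivity), sub_eq_neg_add, Real.rpow_add_one hu₀.ne', mul_one]
  rw [hmin, ← mul_assoc, show 4 * B * Hnorm z ^ σ * u ^ (-σ) = 4 * c by rw [hcz]; ring]
  rcases le_total u 1 with h1 | h1
  · rw [min_eq_left h1]
    nlinarith [mul_le_mul_of_nonneg_left h1 (mul_nonneg hc₀ hu₀.le)]
  · rw [min_eq_right h1]
    linarith

lemma exists_abs_wordLDeriv_tsum_sub_le (hL : 1 < L) (k : ℕ) (hσ₀ : 0 < σ) (hσ₁ : σ < 1) :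
    ∃ C, 0 ≤ C ∧ ∀ B T, IsLacunary L k σ B T → ∀ α, wordWeight α = k → ∀ x y,
      |wordLDeriv α (fun x => ∑' n, T n x) x - wordLDeriv α (fun x => ∑' n, T n x) y| ≤
        C * B * Hdist x y ^ σ := by
  obtain ⟨C, hC, hsum⟩ := exists_tsum_min_rpow_le hL (sub_pos.2 hσ₁) hσ₀
  refine ⟨4 * C, by positivity, fun B T h α hα x y => ?_⟩
  have hB := h.nonneg
  have hy : y = Hmul x (Hmul (Hinv x) y) := (Hmul_Hinv_cancel x y).symm
  set z := Hmul (Hinv x) y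
  rw [hy, Hdist_Hmul_left, abs_sub_comm]
  rcases (Hnorm_nonneg z).eq_or_lt with hz | hz
  · rw [Hmul_eq_of_Hnorm_eq_zero x hz.symm, sub_self, abs_zero, ← hz, Real.zero_rpow hσ₀.ne',
      mul_zero]
  obtain ⟨hsummable, hle⟩ := hsum _ hz
  rw [h.wordLDeriv_tsum hL hσ₀ hα.le, ← Summable.tsum_sub (h.summable_wordLDeriv hL hσ₀ hα.le _)
    (h.summable_wordLDeriv hL hσ₀ hα.le _)]
  refine (tsum_of_norm_bounded
    (f := fun n => wordLDeriv α (T n) (Hmul x z) - wordLDeriv α (T n) x)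
    (hsummable.hasSum.mul_left (4 * B * Hnorm z ^ σ))
    fun n => h.abs_wordLDeriv_sub_le hL hα n x hz).trans ?_
  have : 0 ≤ 4 * B * Hnorm z ^ σ := by positivity
  linarith [mul_le_mul_of_nonneg_left hle this]

end IsLacunary

lemma CsNorm_le {k : ℕ} {σ : ℝ} {f : H3 → ℝ} {S H : ℝ} (hS₀ : 0 ≤ S) (hH₀ : 0 ≤ H)
    (hS : ∀ α, wordWeight α ≤ k → ∀ x, |wordLDeriv α f x| ≤ S)
    (hH : ∀ α, wordWeight α = k → ∀ x y,
      |wordLDeriv α f x - wordLDeriv α f y| ≤ H * Hdist x y ^ σ) :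
    CsNorm k σ f ≤ (∑ n ∈ Finset.range (k + 1), 3 ^ n) * S + H := by
  refine add_le_add ?_ (Real.sSup_le ?_ hH₀)
  · rw [Finset.sum_mul]
    refine Finset.sum_le_sum fun n _ => ?_
    calc ∑ v : Fin n → Fin 3, (if wordWeight (List.ofFn v) ≤ k then supDeriv (List.ofFn v) f else 0)
        ≤ ∑ _v : Fin n → Fin 3, S := Finset.sum_le_sum fun v _ => by
          split_ifs with hv
          · exact Real.sSup_le (by rintro _ ⟨x, rfl⟩; exact hS _ hv x) hS₀
          · exact hS₀
      _ = 3 ^ n * S := by simp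
  · rintro _ ⟨α, x, y, hα, -, rfl⟩
    exact div_le_of_le_mul₀ (Real.rpow_nonneg (Hnorm_nonneg _) _) hH₀ (hH α hα x y)

lemma IsLacunary.exists_CsNorm_tsum_le {L σ : ℝ} (hL : 1 < L) (k : ℕ) (hσ₀ : 0 < σ) (hσ₁ : σ < 1) :
    ∃ K, 0 ≤ K ∧ ∀ B T, IsLacunary L k σ B T →
      MemCs k σ (fun x => ∑' n, T n x) ∧ CsNorm k σ (fun x => ∑' n, T n x) ≤ K * B := by
  obtain ⟨C, hC, hHolder⟩ := exists_abs_wordLDeriv_tsum_sub_le hL k hσ₀ hσ₁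
  set S : ℝ := ∑' n : ℕ, (L ^ n) ^ (-σ)
  have hS : 0 ≤ S := tsum_nonneg fun n => by positivity
  refine ⟨(∑ n ∈ Finset.range (k + 1), 3 ^ n) * S + C, by positivity, fun B T h => ?_⟩
  have hB := h.nonneg
  refine ⟨⟨fun α i hα x => ?_, fun α hα => ⟨h.continuous_wordLDeriv_tsum hL hσ₀ hα, S * B,
    h.abs_wordLDeriv_tsum_le hL hσ₀ hα⟩, C * B, hHolder B T h⟩, ?_⟩
  · have hα' : wordWeight α ≤ k := by rw [wordWeight_cons] at hα; lia
    rw [h.wordLDeriv_tsum hL hσ₀ hα']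
    exact (h.hasFieldDeriv_tsum hL hσ₀ hα x).lineDifferentiableAt
  · refine (CsNorm_le (by positivity) (by positivity)
      (fun α hα => h.abs_wordLDeriv_tsum_le hL hσ₀ hα) (hHolder B T h)).trans_eq ?_
    ring

/-! ### Superpositions of bumps over the lattice -/

/-- The lattice point `κ` such that `x` lies in the translate of the cube `[-1/2, 1/2]³` by `κ`. -/
def nearestLattice (x : H3) : ℤ × ℤ × ℤ :=
  (round x.1, round x.2.1, round (x.2.2 + 2 * (round x.1 * x.2.1 - round x.2.1 * x.1)))

lemma Hmul_Hinv_latticePt (κ : ℤ × ℤ × ℤ) (x : H3) : Hmul (Hinv (latticePt κ)) x =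
    (x.1 - κ.1, x.2.1 - κ.2.1, x.2.2 + 2 * (κ.1 * x.2.1 - κ.2.1 * x.1) - κ.2.2) := by
  ext <;> simp only [Hmul, Hinv, latticePt] <;> ring

lemma norm_Hmul_nearestLattice_le (x : H3) :
    ‖Hmul (Hinv (latticePt (nearestLattice x))) x‖ ≤ 1 / 2 := by
  rw [Hmul_Hinv_latticePt, Prod.norm_def, Prod.norm_def]
  exact max_le (abs_sub_round _) (max_le (abs_sub_round _) (abs_sub_round _))

lemma eq_of_abs_intCast_sub_intCast_lt_one {a b : ℤ} (h : |(a : ℝ) - b| < 1) : a = b :=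
  sub_eq_zero.1 (Int.abs_lt_one_iff.1 (mod_cast h))

lemma eq_of_norm_Hmul_latticePt_add_norm_lt {κ κ' : ℤ × ℤ × ℤ} {x : H3}
    (h : ‖Hmul (Hinv (latticePt κ)) x‖ + ‖Hmul (Hinv (latticePt κ')) x‖ < 1) : κ = κ' := by
  have hsub := (norm_sub_le _ _).trans_lt h
  simp only [Hmul_Hinv_latticePt, Prod.norm_def, Prod.mk_sub_mk, sub_sub_sub_cancel_left,
    sup_lt_iff, Real.norm_eq_abs] at hsub
  obtain ⟨h₁, h₂, h₃⟩ := hsub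
  have e₁ := eq_of_abs_intCast_sub_intCast_lt_one h₁
  have e₂ := eq_of_abs_intCast_sub_intCast_lt_one h₂
  rw [e₁, e₂, sub_sub_sub_cancel_left] at h₃
  exact Prod.ext e₁.symm (Prod.ext e₂.symm (eq_of_abs_intCast_sub_intCast_lt_one h₃).symm)

lemma contDiff_Hmul_left (x : H3) : ContDiff ℝ (⊤ : ℕ∞) (Hmul x) := by
  unfold Hmul
  fun_prop

lemma contDiff_Hdil (l : ℝ) : ContDiff ℝ (⊤ : ℕ∞) (Hdil l) := by
  unfold Hdil
  fun_prop

/-- The function `x ↦ ∑ κ, e κ * φ (κ⁻¹ * x)`, for `φ` supported in `[-1/4, 1/4]³`: the only term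
that does not vanish at `x` is that of the nearest lattice point. -/
def latticeSum (φ : H3 → ℝ) (e : ℤ × ℤ × ℤ → ℝ) (x : H3) : ℝ :=
  e (nearestLattice x) * φ (Hmul (Hinv (latticePt (nearestLattice x))) x)

section LatticeSum

variable {φ : H3 → ℝ} (hφ : ∀ x, 1 / 4 ≤ ‖x‖ → φ x = 0) (e : ℤ × ℤ × ℤ → ℝ)

include hφ

lemma latticeSum_eq {κ : ℤ × ℤ × ℤ} {x : H3} (hx : ‖Hmul (Hinv (latticePt κ)) x‖ < 3 / 4) :
    latticeSum φ e x = e κ * φ (Hmul (Hinv (latticePt κ)) x) := by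
  have hnear := norm_Hmul_nearestLattice_le x
  by_cases h : nearestLattice x = κ
  · rw [latticeSum, h]
  · have hsep := le_of_not_gt (mt (eq_of_norm_Hmul_latticePt_add_norm_lt (x := x)) h)
    rw [latticeSum, hφ _ (by linarith), hφ _ (by linarith), mul_zero, mul_zero]

lemma latticeSum_eventuallyEq (x : H3) :
    latticeSum φ e =ᶠ[nhds x] fun y =>
      e (nearestLattice x) * φ (Hmul (Hinv (latticePt (nearestLattice x))) y) := by
  have hcont : Continuous fun y => ‖Hmul (Hinv (latticePt (nearestLattice x))) y‖ :=
    (contDiff_Hmul_left _).continuous.norm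
  have hlt : ‖Hmul (Hinv (latticePt (nearestLattice x))) x‖ < 3 / 4 :=
    (norm_Hmul_nearestLattice_le x).trans_lt (by norm_num)
  filter_upwards [hcont.continuousAt.eventually_lt_const hlt] with y hy
  exact latticeSum_eq hφ e hy

lemma contDiff_latticeSum (hs : ContDiff ℝ (⊤ : ℕ∞) φ) : ContDiff ℝ (⊤ : ℕ∞) (latticeSum φ e) :=
  contDiff_iff_contDiffAt.2 fun x => (contDiff_const.mul
    (hs.comp (contDiff_Hmul_left _))).contDiffAt.congr_of_eventuallyEq
      (latticeSum_eventuallyEq hφ e x)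

lemma abs_wordLDeriv_latticeSum_le {α : List (Fin 3)} {M δ : ℝ}
    (hM : ∀ x, |wordLDeriv α φ x| ≤ M) (he : ∀ κ, |e κ| ≤ δ) (x : H3) :
    |wordLDeriv α (latticeSum φ e) x| ≤ δ * M := by
  rw [(wordLDeriv_eventuallyEq (latticeSum_eventuallyEq hφ e x) α).self_of_nhds,
    wordLDeriv_const_mul, wordLDeriv_comp_Hmul, abs_mul]
  exact mul_le_mul (he _) (hM _) (abs_nonneg _) ((abs_nonneg _).trans (he (nearestLattice x)))

end LatticeSum

lemma Xdiff_comp_Hdil (m : ℕ) (r : ℝ) (y : H3) (f : H3 → ℝ) (l : ℝ) :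
    Xdiff m r y (fun x => f (Hdil l x)) = Xdiff m (l * r) (Hdil l y) f := by
  simp only [Xdiff_apply, fwdDiff_iter_eq_sum_shift, Hdil_Hmul, Hdil_Hexp]
  simp [wH, mul_left_comm]

lemma abs_Xdiff_latticeSum {φ : H3 → ℝ} (h₀ : φ 0 = 1) {ρ : ℝ} (hφ : ∀ x, ρ ≤ ‖x‖ → φ x = 0)
    (hρ₀ : 0 < ρ) (hρ : ρ ≤ 1 / 4) {m : ℕ} (hmρ : m * ρ ≤ 1 / 4) (e : ℤ × ℤ × ℤ → ℝ)
    (κ : ℤ × ℤ × ℤ) : |Xdiff m ρ (latticePt κ) (latticeSum φ e)| = |e κ| := by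
  have hnorm (i : ℕ) : ‖Hexp 0 (i * ρ)‖ = i * ρ := by
    simpa [Hexp, Prod.norm_def, abs_of_pos hρ₀] using by positivity
  have hval (i : ℕ) (hi : i ∈ Finset.range (m + 1)) :
      latticeSum φ e (Hmul (latticePt κ) (Hexp 0 (0 + i • ρ))) = e κ * φ (Hexp 0 (i * ρ)) := by
    have hiρ : i * ρ ≤ m * ρ := by
      gcongr
      exact Finset.mem_range_succ_iff.1 hi
    rw [zero_add, nsmul_eq_mul, latticeSum_eq (fun x hx => hφ x (hρ.trans hx)) e (κ := κ),
      Hinv_Hmul_cancel]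
    rw [Hinv_Hmul_cancel, hnorm]
    linarith
  have hzero (i : ℕ) (hi : i ≠ 0) : φ (Hexp 0 (i * ρ)) = 0 := by
    have hi' : (1 : ℝ) ≤ i := mod_cast Nat.one_le_iff_ne_zero.2 hi
    exact hφ _ (by rw [hnorm]; exact le_mul_of_one_le_left hρ₀.le hi')
  have hone : φ (Hexp 0 0) = 1 := h₀ ▸ congrArg φ (by ext <;> simp [Hexp])
  rw [Xdiff_apply, fwdDiff_iter_eq_sum_shift, Finset.sum_congr rfl fun i hi => by rw [hval i hi],
    Finset.sum_eq_single_of_mem 0 (by simp) fun i _ hi => by rw [hzero i hi, mul_zero, smul_zero]]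
  simp [hone, abs_mul]

/-- The `n`-th layer of the perturbation: bumps at scale `L ^ (-n)`, with coefficients `e` and of
the size `(L ^ n) ^ (-s)` allowed in `C^s(ℍ)`. -/
def layer (L s : ℝ) (φ : H3 → ℝ) (n : ℕ) (e : ℤ × ℤ × ℤ → ℝ) (x : H3) : ℝ :=
  (L ^ n) ^ (-s) * latticeSum φ e (Hdil (L ^ n) x)

lemma isLacunary_layer {L σ : ℝ} {k : ℕ} (hL : 0 < L) {φ : H3 → ℝ} (hs : ContDiff ℝ (⊤ : ℕ∞) φ)
    (hφ : ∀ x, 1 / 4 ≤ ‖x‖ → φ x = 0) {M : ℝ}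
    (hM : ∀ α, wordWeight α ≤ k + 2 → ∀ x, |wordLDeriv α φ x| ≤ M) {e : ℕ → ℤ × ℤ × ℤ → ℝ} {δ : ℝ}
    (he : ∀ n κ, |e n κ| ≤ δ) :
    IsLacunary L k σ (δ * M) (fun n => layer L (k + σ) φ n (e n)) where
  contDiff n := contDiff_const.mul ((contDiff_latticeSum hφ (e n) hs).comp (contDiff_Hdil _))
  abs_wordLDeriv_le n α hα x := by
    have hLn : 0 < L ^ n := pow_pos hL n
    have hderiv : wordLDeriv α (layer L (k + σ) φ n (e n)) x =
        wordLDeriv α (latticeSum φ (e n)) (Hdil (L ^ n) x) *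
          (L ^ n) ^ (wordWeight α - (k + σ)) := by
      unfold layer
      simp only [wordLDeriv_const_mul, wordLDeriv_comp_Hdil]
      rw [← mul_assoc, ← Real.rpow_add_natCast hLn.ne',
        neg_add_eq_sub, mul_comm]
    rw [hderiv, abs_mul, abs_of_nonneg (by positivity : 0 ≤ (L ^ n) ^ (wordWeight α - (k + σ)))]
    gcongr
    exact abs_wordLDeriv_latticeSum_le hφ (e n) (hM α hα) (he n) _

lemma abs_Xdiff_layer {L : ℝ} (hL : 0 < L) (s : ℝ) {φ : H3 → ℝ} (h₀ : φ 0 = 1) {ρ : ℝ}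
    (hφ : ∀ x, ρ ≤ ‖x‖ → φ x = 0) (hρ₀ : 0 < ρ) (hρ : ρ ≤ 1 / 4) {m : ℕ} (hmρ : m * ρ ≤ 1 / 4)
    (n : ℕ) (κ : ℤ × ℤ × ℤ) (e : ℤ × ℤ × ℤ → ℝ) :
    |Xdiff m (ρ / L ^ n) (Hdil (L ^ n)⁻¹ (latticePt κ)) (layer L s φ n e)| =
      (L ^ n) ^ (-s) * |e κ| := by
  have hLn : 0 < L ^ n := pow_pos hL n
  have hsmul : layer L s φ n e =
      (L ^ n) ^ (-s) • fun x => latticeSum φ e (Hdil (L ^ n) x) := rfl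
  rw [hsmul, map_smul, Xdiff_comp_Hdil, Hdil_Hdil, mul_inv_cancel₀ hLn.ne', Hdil_one,
    mul_div_cancel₀ _ hLn.ne', smul_eq_mul, abs_mul, abs_of_pos (by positivity),
    abs_Xdiff_latticeSum h₀ hφ hρ₀ hρ hmρ]

/-! ### Density -/

lemma Hmul_Hinv_Hmul_Hinv (x y : H3) : Hmul y (Hinv (Hmul (Hinv x) y)) = x := by
  ext <;> simp only [Hmul, Hinv] <;> ring

lemma Hnorm_Hinv (x : H3) : Hnorm (Hinv x) = Hnorm x := by
  simp [Hnorm, Hinv]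

lemma Hnorm_le_one_of_norm_le_half {x : H3} (hx : ‖x‖ ≤ 1 / 2) : Hnorm x ≤ 1 := by
  rw [Prod.norm_def, Prod.norm_def, max_le_iff, max_le_iff] at hx
  obtain ⟨h₁, h₂, h₃⟩ := hx
  have h₁' := sq_le_sq.2 (h₁.trans (le_abs_self _))
  have h₂' := sq_le_sq.2 (h₂.trans (le_abs_self _))
  have h₃' := sq_le_sq.2 (h₃.trans (le_abs_self _))
  exact Real.rpow_le_one (by positivity) (by nlinarith) (by norm_num)

lemma exists_Hmul_eq_Hdil_latticePt {l : ℝ} (hl : 0 < l) (x : H3) :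
    ∃ κ z, Hnorm z ≤ l⁻¹ ∧ Hmul x z = Hdil l⁻¹ (latticePt κ) := by
  set κ := nearestLattice (Hdil l x)
  set v := Hmul (Hinv (latticePt κ)) (Hdil l x)
  refine ⟨κ, Hdil l⁻¹ (Hinv v), ?_, ?_⟩
  · rw [Hnorm_Hdil (by positivity), Hnorm_Hinv]
    exact mul_le_of_le_one_right (by positivity)
      (Hnorm_le_one_of_norm_le_half (norm_Hmul_nearestLattice_le _))
  · rw [← Hmul_Hinv_Hmul_Hinv (latticePt κ) (Hdil l x), Hdil_Hmul, Hdil_Hdil,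
      inv_mul_cancel₀ hl.ne', Hdil_one]

lemma hasLargeXdiff_of_latticePt {L ρ c s : ℝ} (hL : 1 < L) (hρ : 0 < ρ) (hc : 0 < c) {m : ℕ}
    {f : H3 → ℝ} (hf : ∀ n κ, c * (L ^ n) ^ (-s) ≤
      |Xdiff m (ρ / L ^ n) (Hdil (L ^ n)⁻¹ (latticePt κ)) f|) : HasLargeXdiff m s f := by
  have hLn (n : ℕ) : 0 < L ^ n := pow_pos (one_pos.trans hL) n
  have hlim : Filter.Tendsto (fun n : ℕ => ρ / L ^ n) Filter.atTop (nhdsWithin 0 (Set.Ioi 0)) :=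
    tendsto_nhdsWithin_iff.2 ⟨(tendsto_pow_atTop_atTop_of_one_lt hL).const_div_atTop ρ,
      .of_forall fun n => div_pos hρ (hLn n)⟩
  refine ⟨c * ρ ^ (-s), by positivity, ρ⁻¹, by positivity, fun x₀ => hlim.frequently
    (.of_forall fun n => ?_)⟩
  obtain ⟨κ, z, hz, hκ⟩ := exists_Hmul_eq_Hdil_latticePt (hLn n) x₀
  refine ⟨z, hz.trans_eq (by field_simp), ?_⟩
  have hscale : ρ ^ (-s) * (ρ / L ^ n) ^ s = (L ^ n) ^ (-s) := by
    rw [Real.div_rpow hρ.le (hLn n).le, Real.rpow_neg hρ.le, Real.rpow_neg (hLn n).le,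
      inv_mul_eq_div, div_div_cancel_left' (by positivity)]
  rw [mul_assoc, hscale, hκ]
  exact hf n κ

lemma exists_bump {ρ : ℝ} (hρ : 0 < ρ) : ∃ φ : H3 → ℝ, ContDiff ℝ (⊤ : ℕ∞) φ ∧
    HasCompactSupport φ ∧ φ 0 = 1 ∧ ∀ x, ρ ≤ ‖x‖ → φ x = 0 := by
  let φ : ContDiffBump (0 : H3) := ⟨ρ / 2, ρ, half_pos hρ, half_lt_self hρ⟩
  exact ⟨φ, φ.contDiff, φ.hasCompactSupport,
    φ.one_of_mem_closedBall (by simp [φ, (half_pos hρ).le]),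
    fun x hx => φ.zero_of_le_dist (by simpa [φ] using hx)⟩

namespace IsLacunary

variable {L σ B : ℝ} {k : ℕ} {T : ℕ → H3 → ℝ}

lemma abs_tsum_nat_add_le (h : IsLacunary L k σ B T) (hL : 0 < L)
    (hLs : L ^ (-(k + σ)) ≤ 1 / 2) (n : ℕ) (x : H3) :
    |∑' i, T (i + (n + 1)) x| ≤ 2 * B * L ^ (-(k + σ)) * (L ^ n) ^ (-(k + σ)) := by
  have hB := h.nonneg
  refine (tsum_of_norm_bounded (f := fun i => T (i + (n + 1)) x)
    (hasSum_geometric_two.mul_left (B * L ^ (-(k + σ)) * (L ^ n) ^ (-(k + σ))))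
    fun i => ?_).trans_eq (by ring)
  calc |T (i + (n + 1)) x| ≤ B * (L ^ (i + (n + 1))) ^ (-(k + σ)) := by
        simpa [wordWeight, wordLDeriv] using
          h.abs_wordLDeriv_le (i + (n + 1)) [] (by simp [wordWeight]) x
    _ = B * L ^ (-(k + σ)) * (L ^ n) ^ (-(k + σ)) * (L ^ (-(k + σ))) ^ i := by
        simp only [← Real.rpow_pow_comm hL.le]
        ring
    _ ≤ B * L ^ (-(k + σ)) * (L ^ n) ^ (-(k + σ)) * (1 / 2) ^ i := by gcongr

lemma abs_Xdiff_sub_sum_le (h : IsLacunary L k σ B T) (hL : 1 < L) (hσ : 0 < σ)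
    (hLs : L ^ (-(k + σ)) ≤ 1 / 2) (f : H3 → ℝ) (m n : ℕ) (r : ℝ) (y : H3) :
    |Xdiff m r y (f - ∑ i ∈ Finset.range (n + 1), T i)| ≤
      |Xdiff m r y (fun x => f x - ∑' i, T i x)| +
        2 ^ m * (2 * B * L ^ (-(k + σ)) * (L ^ n) ^ (-(k + σ))) := by
  have hsplit : f - ∑ i ∈ Finset.range (n + 1), T i =
      (fun x => f x - ∑' i, T i x) + fun x => ∑' i, T (i + (n + 1)) x := by
    ext x
    have hsum : Summable fun i => T i x :=
      h.summable_wordLDeriv hL hσ (α := []) (by simp [wordWeight]) x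
    simp only [Pi.sub_apply, Pi.add_apply, Finset.sum_apply, ← hsum.sum_add_tsum_nat_add (n + 1)]
    ring
  rw [hsplit, map_add]
  exact (abs_add_le _ _).trans (add_le_add_right
    (abs_Xdiff_le fun i _ => h.abs_tsum_nat_add_le (one_pos.trans hL) hLs n _) _)

end IsLacunary

section Greedy

variable {ι V : Type*} [AddCommGroup V] [Module ℝ V] {δ : ℝ}

lemma exists_le_abs_map_sub (hδ : 0 ≤ δ) {a : ℝ} {Λ : (ι → ℝ) → V} {ℓ : ι → V →ₗ[ℝ] ℝ}
    (hΛ : ∀ κ e, |ℓ κ (Λ e)| = a * |e κ|) (g : V) :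
    ∃ e : ι → ℝ, (∀ κ, |e κ| ≤ δ) ∧ ∀ κ, a * δ / 2 ≤ |ℓ κ (g - Λ e)| := by
  classical
  set e : ι → ℝ := fun κ => if a * δ / 2 ≤ |ℓ κ g| then 0 else δ with he
  refine ⟨e, fun κ => ?_, fun κ => ?_⟩
  · simp only [he]
    split_ifs
    · simpa using hδ
    · exact (abs_of_nonneg hδ).le
  · have hκ := hΛ κ e
    rw [map_sub]
    by_cases h : a * δ / 2 ≤ |ℓ κ g|
    · have hzero : ℓ κ (Λ e) = 0 := abs_eq_zero.1 (by rw [hκ, he]; simp [h])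
      rwa [hzero, sub_zero]
    · have hfull : |ℓ κ (Λ e)| = a * δ := by rw [hκ, he]; simp [h, abs_of_nonneg hδ]
      linarith [abs_sub_abs_le_abs_sub (ℓ κ (Λ e)) (ℓ κ g), abs_sub_comm (ℓ κ (Λ e)) (ℓ κ g)]

lemma exists_seq_le_abs_map_sub_sum (hδ : 0 ≤ δ) {a : ℕ → ℝ} {Λ : ℕ → (ι → ℝ) → V}
    {ℓ : ℕ → ι → V →ₗ[ℝ] ℝ} (hΛ : ∀ n κ e, |ℓ n κ (Λ n e)| = a n * |e κ|) (f : V) :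
    ∃ e : ℕ → ι → ℝ, (∀ n κ, |e n κ| ≤ δ) ∧
      ∀ n κ, a n * δ / 2 ≤ |ℓ n κ (f - ∑ i ∈ Finset.range (n + 1), Λ i (e i))| := by
  choose E hE hlarge using fun n => exists_le_abs_map_sub hδ (hΛ n)
  let g : ℕ → V := fun n => n.rec f fun i v => v - Λ i (E i v)
  have hg (n : ℕ) : g n = f - ∑ i ∈ Finset.range n, Λ i (E i (g i)) := by
    induction n with
    | zero => simp [g]
    | succ n ih =>
      rw [Finset.sum_range_succ, ← sub_sub, ← ih]
  refine ⟨fun n => E n (g n), fun n => hE n (g n), fun n κ => ?_⟩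
  rw [← hg]
  exact hlarge n (g n) κ

end Greedy

lemma IsLacunary.hasLargeXdiff_sub_tsum {L σ M δ ρ : ℝ} {k m : ℕ} {T : ℕ → H3 → ℝ}
    (h : IsLacunary L k σ (δ * M) T) (hL : 1 < L) (hσ : 0 < σ) (hLs : L ^ (-(k + σ)) ≤ 1 / 2)
    (hLM : L ^ (-(k + σ)) * (2 ^ (m + 3) * M) ≤ 1) (hδ : 0 < δ) (hρ : 0 < ρ) {f : H3 → ℝ}
    (hf : ∀ n κ, (L ^ n) ^ (-(k + σ)) * δ / 2 ≤ |Xdiff m (ρ / L ^ n)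
      (Hdil (L ^ n)⁻¹ (latticePt κ)) (f - ∑ i ∈ Finset.range (n + 1), T i)|) :
    HasLargeXdiff m (k + σ) (fun x => f x - ∑' n, T n x) := by
  refine hasLargeXdiff_of_latticePt hL hρ (by positivity : 0 < δ / 4) fun n κ => ?_
  have _ : 0 < L := one_pos.trans hL
  set a := (L ^ n) ^ (-(k + σ))
  have htail : 2 ^ m * (2 * (δ * M) * L ^ (-(k + σ)) * a) ≤ δ / 4 * a := calc
    _ = L ^ (-(k + σ)) * (2 ^ (m + 3) * M) * (δ / 4 * a) := by ring
    _ ≤ δ / 4 * a := mul_le_of_le_one_left (by positivity) hLM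
  linarith [hf n κ, h.abs_Xdiff_sub_sum_le hL hσ hLs f m n (ρ / L ^ n)
    (Hdil (L ^ n)⁻¹ (latticePt κ))]

lemma exists_one_lt_rpow_neg_le {s : ℝ} (hs : 0 < s) (C : ℝ) :
    ∃ L : ℝ, 1 < L ∧ L ^ (-s) ≤ 1 / 2 ∧ L ^ (-s) * C ≤ 1 := by
  have hlim := tendsto_rpow_neg_atTop hs
  have hlim' : Filter.Tendsto (fun L : ℝ => L ^ (-s) * C) Filter.atTop (nhds 0) := by
    simpa using hlim.mul_const C
  exact ((Filter.eventually_gt_atTop 1).and ((hlim.eventually_le_const one_half_pos).and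
    (hlim'.eventually_le_const one_pos))).exists

lemma exists_isLacunary_hasLargeXdiff_sub_tsum (k : ℕ) {σ : ℝ} (hσ : 0 < σ) :
    ∃ L > 1, ∃ M, 0 ≤ M ∧ ∀ (f : H3 → ℝ) (δ : ℝ), 0 < δ → ∃ T, IsLacunary L k σ (δ * M) T ∧
      HasLargeXdiff (k + 1) (k + σ) (fun x => f x - ∑' n, T n x) := by
  have hk : (k + 1 : ℕ) * (1 / (4 * (k + 1)) : ℝ) = 1 / 4 := by
    push_cast
    field_simp
  set ρ : ℝ := 1 / (4 * (k + 1))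
  have hρ₀ : 0 < ρ := by positivity
  have hρ : ρ ≤ 1 / 4 := by
    rw [← hk]
    exact le_mul_of_one_le_left hρ₀.le (by simp)
  obtain ⟨φ, hsmooth, hcompact, h₀, hφ⟩ := exists_bump hρ₀
  obtain ⟨M, hM₀, hM⟩ := exists_abs_wordLDeriv_le hsmooth hcompact (k + 2)
  obtain ⟨L, hL, hLs, hLM⟩ := exists_one_lt_rpow_neg_le (by positivity : 0 < k + σ)
    (2 ^ (k + 1 + 3) * M)
  have hL₀ : 0 < L := one_pos.trans hL
  refine ⟨L, hL, M, hM₀, fun f δ hδ => ?_⟩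
  obtain ⟨e, he, hlarge⟩ := exists_seq_le_abs_map_sub_sum hδ.le
    (fun n κ e => abs_Xdiff_layer hL₀ (k + σ) h₀ hφ hρ₀ hρ hk.le n κ e) f
  have hT := isLacunary_layer hL₀ hsmooth (fun x hx => hφ x (hρ.trans hx)) hM he (σ := σ)
  exact ⟨_, hT, hT.hasLargeXdiff_sub_tsum hL hσ hLs hLM hδ hρ₀ hlarge⟩

lemma exists_mem_genericSet_CsNorm_sub_lt {k : ℕ} {σ : ℝ} (hσ₀ : 0 < σ) (hσ₁ : σ < 1)
    {f : H3 → ℝ} (hf : MemCs k σ f) {ε : ℝ} (hε : 0 < ε) :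
    ∃ g ∈ genericSet k σ, CsNorm k σ (fun x => f x - g x) < ε := by
  obtain ⟨L, hL, M, hM, hdense⟩ := exists_isLacunary_hasLargeXdiff_sub_tsum k hσ₀
  obtain ⟨K, hK, hnorm⟩ := IsLacunary.exists_CsNorm_tsum_le hL k hσ₀ hσ₁
  obtain ⟨T, hT, hlarge⟩ := hdense f (ε / (K * M + 1)) (by positivity)
  obtain ⟨hmem, hle⟩ := hnorm _ T hT
  refine ⟨_, ⟨hf.sub hmem, hlarge⟩, ?_⟩
  simp only [sub_sub_cancel]
  calc CsNorm k σ (fun x => ∑' n, T n x) ≤ K * (ε / (K * M + 1) * M) := hle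
    _ = ε * (K * M / (K * M + 1)) := by ring
    _ < ε := mul_lt_of_lt_one_right hε ((div_lt_one (by positivity)).2 (lt_add_one _))

/-- For `s = k + σ ∉ ℕ` (with `k ∈ ℕ`, `σ ∈ (0,1)`), there is a dense open
(hence generic) subset `R` of the Banach space `C^s(ℍ)` such that every `f ∈ R` has pointwise
Hölder exponent exactly `s` at every point: generic functions of `C^s(ℍ)` are monofractal. -/
theorem generic_monofractality_in_Cs (s σ : ℝ) (k : ℕ)
    (hσ0 : 0 < σ) (hσ1 : σ < 1) (hs : s = k + σ) :
    ∃ R : Set (H3 → ℝ),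
      (∀ f ∈ R, MemCs k σ f) ∧
      (∀ f ∈ R, ∃ ε : ℝ, 0 < ε ∧ ∀ g : H3 → ℝ, MemCs k σ g →
          CsNorm k σ (fun x => f x - g x) < ε → g ∈ R) ∧
      (∀ f : H3 → ℝ, MemCs k σ f → ∀ ε : ℝ, 0 < ε →
          ∃ g ∈ R, CsNorm k σ (fun x => f x - g x) < ε) ∧
      (∀ f ∈ R, ∀ x₀ : H3, holderExponent f x₀ = s) := by
  subst hs
  exact ⟨genericSet k σ, fun f hf => hf.1, fun f hf => exists_forall_CsNorm_lt_mem_genericSet hf,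
    fun f hf ε hε => exists_mem_genericSet_CsNorm_sub_lt hσ0 hσ1 hf hε,
    fun f hf x₀ => holderExponent_eq_of_mem_genericSet hσ0 hσ1 hf x₀⟩
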